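/- Attainability on the zero-momentum hyperplane without reversing time: Assume Φ is admissible and generic. Let e denote the constant vector (0,…,0, 1, 0,…,0) ∈ ℝ^{2n} in the p₁-direction. Then for any two points x̃, x̂ ∈ Π there exist m ∈ ℕ and a finite sequence x̃ = z₀, z₁, …, z_m = x̂ of points of Π such that each step z_{i+1} is obtained from z_i in one of the following three ways: (i) z_{i+1} = x(t) for some t ≥ 0 and some solution x of the free system ẋ = f(x) with x(0) = z_i; (ii) z_{i+1} = x(t) − e for some t ≥ 0 and some free solution x with x(0) = z_i + e; (iii) z_{i+1} = x(t) + e for some t ≥ 0 and some free solution x with x(0) = z_i − e. (That is, every point of Π is attainable from every point of Π by compositions of the diffeomorphisms e^{g}∘e^{tf}∘e^{−g}, e^{−g}∘e^{tf}∘e^{g}, e^{tf} with t ≥ 0.) -/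

import Mathlib

open scoped BigOperators
open MeasureTheory Filter Set

noncomputable section

/-- The state space ℝ^{2n}, with coordinates (q,p). -/
abbrev State (n : ℕ) := (Fin n → ℝ) × (Fin n → ℝ)

/-- The drift vector field of the periodic multiparticle system,
`f(q,p) = Σ p_k ∂/∂q_k + Σ (φ(q_{k-1}-q_k) - φ(q_k-q_{k+1})) ∂/∂p_k` with `φ = Φ'`,
with cyclic indexing in `Fin n`. -/
def drift (n : ℕ) [NeZero n] (Φ : ℝ → ℝ) (x : State n) : State n :=
  (x.2, fun k => deriv Φ (x.1 (k - 1) - x.1 k) - deriv Φ (x.1 k - x.1 (k + 1)))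

/-- The momentum coordinate vector `e_{p_j} = ∂/∂p_j`. -/
def ep (n : ℕ) [NeZero n] (j : Fin n) : State n := (0, Pi.single j 1)

/-- The position coordinate vector `e_{q_j} = ∂/∂q_j`. -/
def eq' (n : ℕ) [NeZero n] (j : Fin n) : State n := (Pi.single j 1, 0)

/-- `Φ` is admissible: real analytic, bounded below, and `Φ(y) → +∞` as `y → +∞`. -/
def Admissible (Φ : ℝ → ℝ) : Prop :=
  (∀ x, AnalyticAt ℝ Φ x) ∧ BddBelow (Set.range Φ) ∧ Tendsto Φ atTop atTop

/-- `Φ` is generic: for no `b` is `Φ''` even or odd about `b`. -/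
def Generic (Φ : ℝ → ℝ) : Prop :=
  ∀ b : ℝ,
    (¬ ∀ t : ℝ, deriv (deriv Φ) (b + t) = deriv (deriv Φ) (b - t)) ∧
    (¬ ∀ t : ℝ, deriv (deriv Φ) (b + t) = - deriv (deriv Φ) (b - t))

/-- Lie bracket of vector fields: `[X,Y](x) = DY(x)·X(x) − DX(x)·Y(x)`. -/
def lieBracket {n : ℕ} (X Y : State n → State n) : State n → State n :=
  fun x => fderiv ℝ Y x (X x) - fderiv ℝ X x (Y x)

/-- Admissible trajectory of the single forced system `ẋ = f(x) + u(t) g`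
(in absolutely-continuous/integral form). -/
def IsTrajectory (n : ℕ) [NeZero n] (Φ : ℝ → ℝ) (θ : ℝ) (u : ℝ → ℝ)
    (x : ℝ → State n) : Prop :=
  ContinuousOn x (Set.Icc 0 θ) ∧
  ∀ t ∈ Set.Icc 0 θ,
    x t = x 0 + ∫ s in (0:ℝ)..t, (drift n Φ (x s) + u s • ep n 0)

/-- `z'` is reachable from `z` by the free flow `e^{tf}` in some nonnegative time. -/
def FreeReach (n : ℕ) [NeZero n] (Φ : ℝ → ℝ) (z z' : State n) : Prop :=
  ∃ t ≥ (0:ℝ), ∃ x : ℝ → State n,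
    x 0 = z ∧ (∀ s ∈ Set.Icc 0 t, HasDerivAt x (drift n Φ (x s)) s) ∧ x t = z'

/-- One step by a diffeomorphism of the family
`{e^{g}∘e^{tf}∘e^{−g}, e^{−g}∘e^{tf}∘e^{g}, e^{tf} : t ≥ 0}`, where the time-1 flow of
`±g` is translation by `± e` with `e = ep n 0` the `p₁`-direction. -/
def Step (n : ℕ) [NeZero n] (Φ : ℝ → ℝ) (z z' : State n) : Prop :=
  FreeReach n Φ z z' ∨
  FreeReach n Φ (z + ep n 0) (z' + ep n 0) ∨
  FreeReach n Φ (z - ep n 0) (z' - ep n 0)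

/-!
Let `f_u` be the drift conjugated by the translation by `u • e`. An immersed family of points
attainable from `x ∈ Π` with the largest possible number of parameters is tangent to `f₋₁`, `f₀` and
`f₁`, and to the bracket of these with any field to which all such families are tangent. Analyticity
and genericity of `Φ` make these brackets sweep out every direction of `Π`, so the set attainable
from `x` has nonempty interior `A` in `Π`; likewise the set from which `y ∈ Π` is attainable.

Time may be reversed up to closure: conservation of energy bounds the free motion modulo the centre
of mass, so by Poincaré recurrence `closure A` is invariant under `-f₀`, and then under every `-f_u`
because `-f_u = f_{-u} + 2 (-f₀)`. Every point of `closure A` has points of an open subset of `Π`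
ahead of it that lie in `closure A`, and moving backwards from these shows that `closure A` is open
in `Π`. Hence `closure A = Π`, and `A` meets the set from which `y` is attainable.
-/

open Metric Topology
open scoped NNReal

/-! ### Complete flows and their regularity -/

section Flow

variable {E : Type*} [NormedAddCommGroup E] [NormedSpace ℝ E]

/-- `ψ` is the complete flow of the vector field `Y`: `ψ t z` is the value at time `t ∈ ℝ` of a
solution of `ẋ = Y x` starting at `z`. -/
structure IsFlow (Y : E → E) (ψ : ℝ → E → E) : Prop where
  zero : ∀ z, ψ 0 z = z
  hasDerivAt : ∀ z t, HasDerivAt (fun s => ψ s z) (Y (ψ t z)) t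

theorem norm_le_gronwallBound_abs {h h' : ℝ → E} {K ε T t : ℝ}
    (hderiv : ∀ s, |s| < T → HasDerivAt h (h' s) s)
    (hbound : ∀ s, |s| < T → ‖h' s‖ ≤ K * ‖h s‖ + ε) (ht : |t| < T) :
    ‖h t‖ ≤ gronwallBound ‖h 0‖ K ε |t| := by
  wlog ht₀ : 0 ≤ t generalizing h h' t
  · have reflected := this (h := fun s => h (-s)) (h' := fun s => -h' (-s)) (t := -t)
      (fun s hs => by
        simpa [Function.comp_def] using
          (hderiv (-s) (by rwa [abs_neg])).scomp s (hasDerivAt_neg s))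
      (fun s hs => by simpa using hbound (-s) (by rwa [abs_neg])) (by rwa [abs_neg])
      (by linarith)
    simpa using reflected
  rw [abs_of_nonneg ht₀] at ht ⊢
  have hlt : ∀ s ∈ Icc 0 t, |s| < T := fun s hs => by
    rw [abs_of_nonneg hs.1]; exact hs.2.trans_lt ht
  simpa using norm_le_gronwallBound_of_norm_deriv_right_le (a := 0) (b := t)
    (fun s hs => (hderiv s (hlt s hs)).continuousAt.continuousWithinAt)
    (fun s hs => (hderiv s (hlt s (Ico_subset_Icc_self hs))).hasDerivWithinAt) le_rfl
    (fun s hs => hbound s (hlt s (Ico_subset_Icc_self hs))) t (right_mem_Icc.mpr ht₀)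

theorem norm_sub_le_of_lipschitzOnWith {Y : E → E} {s : Set E} {K : ℝ≥0}
    (hY : LipschitzOnWith K Y s) {x y : ℝ → E} {T t : ℝ}
    (hx : ∀ t, |t| < T → HasDerivAt x (Y (x t)) t ∧ x t ∈ s)
    (hy : ∀ t, |t| < T → HasDerivAt y (Y (y t)) t ∧ y t ∈ s) (ht : |t| < T) :
    ‖x t - y t‖ ≤ ‖x 0 - y 0‖ * Real.exp (K * |t|) := by
  have hbound := norm_le_gronwallBound_abs (h := fun t => x t - y t) (K := K) (ε := 0)
    (fun s hs => (hx s hs).1.sub (hy s hs).1)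
    (fun s hs => by
      simpa [dist_eq_norm] using hY.dist_le_mul _ (hx s hs).2 _ (hy s hs).2) ht
  rwa [gronwallBound_ε0] at hbound

theorem eq_of_lipschitzOnWith {Y : E → E} {s : Set E} {K : ℝ≥0}
    (hY : LipschitzOnWith K Y s) {x y : ℝ → E} {T t : ℝ}
    (hx : ∀ t, |t| < T → HasDerivAt x (Y (x t)) t ∧ x t ∈ s)
    (hy : ∀ t, |t| < T → HasDerivAt y (Y (y t)) t ∧ y t ∈ s) (h₀ : x 0 = y 0) (ht : |t| < T) :
    x t = y t := by
  have hdist := norm_sub_le_of_lipschitzOnWith hY hx hy ht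
  rw [h₀, sub_self, norm_zero, zero_mul] at hdist
  exact sub_eq_zero.mp (norm_le_zero_iff.mp hdist)

namespace IsFlow

variable {Y : E → E} {ψ : ℝ → E → E}

lemma neg (h : IsFlow Y ψ) : IsFlow (-Y) (fun t => ψ (-t)) where
  zero z := by simp [h.zero]
  hasDerivAt z t := by
    simpa [Function.comp_def] using (h.hasDerivAt z (-t)).scomp t (hasDerivAt_neg t)

lemma suspension (h : IsFlow Y ψ) :
    IsFlow (fun p : ℝ × E => (0, p.1 • Y p.2)) fun s p => (p.1, ψ (p.1 * s) p.2) where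
  zero p := by simp [h.zero]
  hasDerivAt p s := by
    have hcomp := (h.hasDerivAt p.2 (p.1 * s)).scomp s ((hasDerivAt_id s).const_mul p.1)
    rw [mul_one] at hcomp
    exact (hasDerivAt_const s p.1).prodMk hcomp

lemma exists_norm_le (h : IsFlow Y ψ) (z : E) (T : ℝ) : ∃ R, ∀ t, |t| < T → ‖ψ t z‖ ≤ R := by
  obtain ⟨R, hR⟩ := (isCompact_Icc (a := -T) (b := T)).exists_bound_of_continuousOn
    fun t _ => (h.hasDerivAt z t).continuousAt.continuousWithinAt
  exact ⟨R, fun t ht => hR t (abs_le.mp ht.le)⟩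

end IsFlow

theorem norm_le_of_a_priori_bound {Y Z : E → E} {x : ℝ → E} {R T : ℝ}
    (hx : ∀ t, HasDerivAt x (Z (x t)) t) (hZ : EqOn Z Y (closedBall 0 (R + 1)))
    (hx₀ : ‖x 0‖ ≤ R)
    (hbound : ∀ S ≤ T, (∀ t, |t| < S → HasDerivAt x (Y (x t)) t) → ∀ t, |t| < S → ‖x t‖ ≤ R)
    {t : ℝ} (ht : |t| ≤ T) : ‖x t‖ ≤ R := by
  have hxc : Continuous x := continuous_iff_continuousAt.mpr fun t => (hx t).continuousAt
  by_contra! hR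
  let r := min ‖x t‖ (R + 1)
  have hRr : R < r := lt_min hR (lt_add_one R)
  -- `τ` is a time of smallest absolute value at which `x` is outside the open ball of radius `r`.
  obtain ⟨τ, ⟨hτt, hrτ⟩, hmin⟩ := (((isCompact_closedBall (0 : ℝ) |t|).inter_right
      (isClosed_le continuous_const hxc.norm)).exists_isMinOn (f := fun s : ℝ => |s|)
      ⟨t, by simp, min_le_left ‖x t‖ _⟩ continuous_abs.continuousOn :
        ∃ τ ∈ closedBall 0 |t| ∩ {s | r ≤ ‖x s‖}, _)
  rw [mem_closedBall_zero_iff, Real.norm_eq_abs] at hτt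
  have hbefore : ∀ s, |s| < |τ| → ‖x s‖ ≤ R :=
    hbound |τ| (hτt.trans ht) fun s hs => by
      have hsr : ‖x s‖ < r := by
        by_contra! h
        exact hs.not_ge (hmin ⟨by simpa using hs.le.trans hτt, h⟩)
      rw [← hZ (mem_closedBall_zero_iff.mpr (hsr.le.trans (min_le_right _ _)))]
      exact hx s
  have hτ₀ : |τ| ≠ 0 := by
    intro h
    rw [abs_eq_zero.mp h] at hrτ
    exact (hx₀.trans_lt hRr).not_ge hrτ
  have hτR : τ ∈ closure (ball (0 : ℝ) |τ|) := by rw [closure_ball _ hτ₀]; simp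
  exact (hRr.trans_le hrτ).not_ge (closure_minimal (t := {s | ‖x s‖ ≤ R})
    (fun s hs => hbefore s (by simpa using hs)) (isClosed_le hxc.norm continuous_const) hτR)

/-- The first variation of `Y` along its own solutions: the field on the tangent bundle whose second
component is the linear variational equation. -/
def tangentField (Y : E → E) (p : E × E) : E × E := (Y p.1, fderiv ℝ Y p.1 p.2)

lemma contDiff_tangentField {Y : E → E} (hY : ContDiff ℝ 2 Y) : ContDiff ℝ 1 (tangentField Y) :=
  ((hY.of_le one_le_two).comp contDiff_fst).prodMk
    (((hY.fderiv_right one_add_one_eq_two.le).comp contDiff_fst).clm_apply contDiff_snd)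

variable [FiniteDimensional ℝ E]

lemma exists_lipschitzOnWith_closedBall {F : Type*} [NormedAddCommGroup F] [NormedSpace ℝ F]
    {Y : E → F} (hY : ContDiff ℝ 1 Y) (R : ℝ) :
    ∃ K : ℝ≥0, LipschitzOnWith K Y (closedBall 0 R) :=
  haveI := FiniteDimensional.proper_real E
  hY.locallyLipschitz.locallyLipschitzOn.exists_lipschitzOnWith_of_compact
    (isCompact_closedBall 0 R)

theorem eq_of_hasDerivAt_of_contDiff {Y : E → E} (hY : ContDiff ℝ 1 Y) {x y : ℝ → E} {T : ℝ}
    (hx : ∀ t, |t| < T → HasDerivAt x (Y (x t)) t)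
    (hy : ∀ t, |t| < T → HasDerivAt y (Y (y t)) t) (h₀ : x 0 = y 0) {t : ℝ} (ht : |t| < T) :
    x t = y t := by
  obtain ⟨S, hS, hST⟩ := exists_between ht
  have hbdd : ∀ {z : ℝ → E}, (∀ t, |t| < T → HasDerivAt z (Y (z t)) t) →
      ∃ A, ∀ s, |s| < S → ‖z s‖ ≤ A := fun {z} hz => by
    obtain ⟨A, hA⟩ := (isCompact_Icc (a := -S) (b := S)).exists_bound_of_continuousOn
      fun s hs => (hz s ((abs_le.mpr hs).trans_lt hST)).continuousAt.continuousWithinAt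
    exact ⟨A, fun s hs => hA s (abs_le.mp hs.le)⟩
  obtain ⟨A, hA⟩ := hbdd hx
  obtain ⟨B, hB⟩ := hbdd hy
  obtain ⟨K, hK⟩ := exists_lipschitzOnWith_closedBall hY (max A B)
  exact eq_of_lipschitzOnWith hK
    (fun s hs => ⟨hx s (hs.trans hST),
      mem_closedBall_zero_iff.mpr ((hA s hs).trans (le_max_left A B))⟩)
    (fun s hs => ⟨hy s (hs.trans hST),
      mem_closedBall_zero_iff.mpr ((hB s hs).trans (le_max_right A B))⟩) h₀ hS

theorem exists_isFlow_of_forall_exists_solution {Y : E → E} (hY : ContDiff ℝ 1 Y)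
    (hsol : ∀ (z : E) (T : ℝ), ∃ x : ℝ → E, x 0 = z ∧
      ∀ t, |t| < T → HasDerivAt x (Y (x t)) t) :
    ∃ ψ, IsFlow Y ψ := by
  choose x hx₀ hx using hsol
  refine ⟨fun t z => x z (|t| + 1) t, fun z => hx₀ _ _, fun z t => ?_⟩
  have hagree : ∀ s, |s| < |t| + 1 → x z (|s| + 1) s = x z (|t| + 2) s := fun s hs =>
    eq_of_hasDerivAt_of_contDiff hY (hx z (|s| + 1))
      (fun u hu => hx z _ u (by linarith)) (by rw [hx₀, hx₀]) (lt_add_one |s|)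
  have hnear : ∀ᶠ s in 𝓝 t, |s| < |t| + 1 :=
    continuous_abs.continuousAt.eventually_lt continuousAt_const (lt_add_one |t|)
  rw [hagree t (lt_add_one |t|)]
  exact (hx z (|t| + 2) t (by linarith)).congr_of_eventuallyEq (hnear.mono hagree)

theorem exists_isFlow_of_hasCompactSupport {Y : E → E} (hY : ContDiff ℝ 1 Y)
    (hsupp : HasCompactSupport Y) : ∃ ψ, IsFlow Y ψ := by
  obtain ⟨C, hC⟩ := hY.lipschitzWith_of_hasCompactSupport hsupp one_ne_zero
  obtain ⟨B, hB⟩ := hsupp.exists_bound_of_continuous hY.continuous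
  lift B to ℝ≥0 using (norm_nonneg _).trans (hB 0)
  refine exists_isFlow_of_forall_exists_solution hY fun z T => ?_
  have hT : (0 : ℝ) ∈ Icc (-|T|) |T| := by simp
  have hPL : IsPicardLindelof (fun _ => Y) ⟨0, hT⟩ z (B * ‖T‖₊) 0 B C :=
    .of_time_independent (fun x _ => hB x) hC.lipschitzOnWith (by simp)
  obtain ⟨x, hx₀, hx⟩ := hPL.exists_eq_forall_mem_Icc_hasDerivWithinAt₀
  refine ⟨x, hx₀, fun t ht => ?_⟩
  have ht' := abs_lt.mp (ht.trans_le (le_abs_self T))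
  exact (hx t (Ioo_subset_Icc_self ht')).hasDerivAt (Icc_mem_nhds ht'.1 ht'.2)

theorem exists_lipschitzWith_isFlow_eqOn_closedBall {Y : E → E} (hY : ContDiff ℝ 1 Y) (R : ℝ) :
    ∃ (K : ℝ≥0) (Z : E → E) (ψ : ℝ → E → E),
      LipschitzWith K Z ∧ IsFlow Z ψ ∧ EqOn Z Y (closedBall 0 R) := by
  let η : ContDiffBump (0 : E) := ⟨max R 1, max R 1 + 1, by positivity, lt_add_one _⟩
  have hZ : ContDiff ℝ 1 fun z => η z • Y z := η.contDiff.smul hY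
  have hsupp : HasCompactSupport fun z => η z • Y z := η.hasCompactSupport.smul_right
  obtain ⟨K, hK⟩ := hZ.lipschitzWith_of_hasCompactSupport hsupp one_ne_zero
  obtain ⟨ψ, hψ⟩ := exists_isFlow_of_hasCompactSupport hZ hsupp
  refine ⟨K, _, ψ, hK, hψ, fun z hz => ?_⟩
  simp only [η.one_of_mem_closedBall (closedBall_subset_closedBall (le_max_left R 1) hz), one_smul]

theorem exists_isFlow_of_a_priori_bound {Y : E → E} (hY : ContDiff ℝ 1 Y)
    (hbound : ∀ (z : E) (T : ℝ), ∃ R : ℝ, ∀ S ≤ T, ∀ x : ℝ → E, x 0 = z →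
      (∀ t, |t| < S → HasDerivAt x (Y (x t)) t) → ∀ t, |t| < S → ‖x t‖ ≤ R) :
    ∃ ψ, IsFlow Y ψ := by
  refine exists_isFlow_of_forall_exists_solution hY fun z T => ?_
  obtain ⟨R, hR⟩ := hbound z T
  obtain ⟨-, Z, ψ, -, hψ, hZ⟩ := exists_lipschitzWith_isFlow_eqOn_closedBall hY (max R ‖z‖ + 1)
  refine ⟨fun t => ψ t z, hψ.zero z, fun t ht => ?_⟩
  have hle : ‖ψ t z‖ ≤ max R ‖z‖ :=
    norm_le_of_a_priori_bound (hψ.hasDerivAt z) hZ (by simp [hψ.zero])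
      (fun S hS hx s hs => (hR S hS _ (hψ.zero z) hx s hs).trans (le_max_left _ _)) ht.le
  rw [← hZ (mem_closedBall_zero_iff.mpr (hle.trans (by linarith)))]
  exact hψ.hasDerivAt z t

namespace IsFlow

variable {Y : E → E} {ψ : ℝ → E → E}

lemma eq_of_hasDerivAt (h : IsFlow Y ψ) (hY : ContDiff ℝ 1 Y) {x : ℝ → E} {T t : ℝ}
    (hx : ∀ t, |t| < T → HasDerivAt x (Y (x t)) t) (ht : |t| < T) : x t = ψ t (x 0) :=
  eq_of_hasDerivAt_of_contDiff hY hx (fun s _ => h.hasDerivAt (x 0) s) (h.zero _).symm ht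

lemma eq_of_forall_hasDerivAt (h : IsFlow Y ψ) (hY : ContDiff ℝ 1 Y) {x : ℝ → E}
    (hx : ∀ t, HasDerivAt x (Y (x t)) t) (t : ℝ) : x t = ψ t (x 0) :=
  h.eq_of_hasDerivAt hY (fun s _ => hx s) (lt_add_one |t|)

lemma add (h : IsFlow Y ψ) (hY : ContDiff ℝ 1 Y) (s t : ℝ) (z : E) :
    ψ (s + t) z = ψ s (ψ t z) := by
  simpa using h.eq_of_forall_hasDerivAt hY
    (fun s => (h.hasDerivAt z (s + t)).comp_add_const s t) s

lemma neg_apply_apply (h : IsFlow Y ψ) (hY : ContDiff ℝ 1 Y) (t : ℝ) (z : E) :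
    ψ (-t) (ψ t z) = z := by
  rw [← h.add hY, neg_add_cancel, h.zero]

lemma apply_neg_apply (h : IsFlow Y ψ) (hY : ContDiff ℝ 1 Y) (t : ℝ) (z : E) :
    ψ t (ψ (-t) z) = z := by
  rw [← h.add hY, add_neg_cancel, h.zero]

/-- Compare with the flow of a globally Lipschitz field that agrees with `Y` around the orbit. -/
theorem exists_eventually_bounds (h : IsFlow Y ψ) (hY : ContDiff ℝ 1 Y) (z : E) (T : ℝ) :
    ∃ R C : ℝ, 0 ≤ C ∧ ∀ᶠ w in 𝓝 z, ∀ t, |t| < T →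
      ‖ψ t w‖ ≤ R ∧ ‖ψ t w - ψ t z‖ ≤ C * ‖w - z‖ := by
  obtain ⟨R, hR⟩ := h.exists_norm_le z T
  obtain ⟨K, Z, ξ, hK, hξ, hZ⟩ := exists_lipschitzWith_isFlow_eqOn_closedBall hY (R + 1)
  have hZY : ∀ {w}, ‖w‖ ≤ R + 1 → Z w = Y w := fun hw => hZ (mem_closedBall_zero_iff.mpr hw)
  have hξz : ∀ t, |t| < T → ξ t z = ψ t z := fun t ht =>
    eq_of_lipschitzOnWith (hK.lipschitzOnWith (s := univ))
      (fun s _ => ⟨hξ.hasDerivAt z s, mem_univ _⟩)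
      (fun s hs => ⟨by
        rw [hZY ((hR s hs).trans (by linarith))]; exact h.hasDerivAt z s, mem_univ _⟩)
      (by rw [hξ.zero, h.zero]) ht
  let C := Real.exp (K * T)
  have hdist : ∀ w t, |t| < T → ‖ξ t w - ψ t z‖ ≤ C * ‖w - z‖ := fun w t ht => by
    have hle := norm_sub_le_of_lipschitzOnWith (hK.lipschitzOnWith (s := univ))
      (fun s _ => ⟨hξ.hasDerivAt w s, mem_univ _⟩) (fun s _ => ⟨hξ.hasDerivAt z s, mem_univ _⟩) ht
    rw [hξz t ht, hξ.zero, hξ.zero, mul_comm] at hle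
    refine hle.trans ?_
    gcongr
    exact Real.exp_le_exp.mpr (by gcongr)
  have hnear : ∀ᶠ w in 𝓝 z, C * ‖w - z‖ < 1 :=
    (by fun_prop : Continuous fun w => C * ‖w - z‖).continuousAt.eventually_lt
      continuousAt_const (by simp)
  refine ⟨R + 1, C, by positivity, hnear.mono fun w hw => ?_⟩
  have hξR : ∀ t, |t| < T → ‖ξ t w‖ ≤ R + 1 := fun t ht => by
    linarith [norm_le_norm_add_norm_sub' (ξ t w) (ψ t z), hdist w t ht, hR t ht]
  have hξw : ∀ t, |t| < T → ξ t w = ψ t w := fun t ht => by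
    have heq := h.eq_of_hasDerivAt hY (x := fun t => ξ t w)
      (fun s hs => by rw [← hZY (hξR s hs)]; exact hξ.hasDerivAt w s) ht
    rwa [hξ.zero] at heq
  exact fun t ht => hξw t ht ▸ ⟨hξR t ht, hdist w t ht⟩

lemma continuous_apply (h : IsFlow Y ψ) (hY : ContDiff ℝ 1 Y) (t : ℝ) : Continuous (ψ t) := by
  refine continuous_iff_continuousAt.mpr fun z => ?_
  obtain ⟨_, C, -, hC⟩ := h.exists_eventually_bounds hY z (|t| + 1)
  have hlim : Tendsto (fun w => C * ‖w - z‖) (𝓝 z) (𝓝 0) := by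
    simpa using (by fun_prop : Continuous fun w => C * ‖w - z‖).tendsto z
  exact tendsto_iff_norm_sub_tendsto_zero.mpr (squeeze_zero' (.of_forall fun _ => norm_nonneg _)
    (hC.mono fun w hw => (hw t (lt_add_one |t|)).2) hlim)

lemma exists_eventually_norm_sub_sub_le (h : IsFlow Y ψ) (hY : ContDiff ℝ 1 Y) (z : E) :
    ∃ C, ∀ᶠ w in 𝓝 z, ∀ t, |t| < 1 → ‖ψ t w - ψ t z - (w - z)‖ ≤ C * ‖w - z‖ * |t| := by
  obtain ⟨R, C, _, hC⟩ := h.exists_eventually_bounds hY z 1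
  obtain ⟨K, hK⟩ := exists_lipschitzOnWith_closedBall hY R
  refine ⟨K * C, hC.mono fun w hw t ht => ?_⟩
  have hball : ∀ {s : ℝ}, |s| < 1 ↔ s ∈ ball (0 : ℝ) 1 := by simp
  have hderiv_le : ∀ s ∈ ball (0 : ℝ) 1, ‖Y (ψ s w) - Y (ψ s z)‖ ≤ K * C * ‖w - z‖ := fun s hs => by
    obtain ⟨hwR, hwC⟩ := hw s (hball.mpr hs)
    have hzR := (hC.self_of_nhds s (hball.mpr hs)).1
    refine (hK.norm_sub_le (mem_closedBall_zero_iff.mpr hwR)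
      (mem_closedBall_zero_iff.mpr hzR)).trans ?_
    rw [mul_assoc]
    gcongr
  have hmean := (convex_ball (0 : ℝ) 1).norm_image_sub_le_of_norm_hasDerivWithin_le
    (fun s _ => ((h.hasDerivAt w s).sub (h.hasDerivAt z s)).hasDerivWithinAt) hderiv_le
    (mem_ball_self one_pos) (hball.mp ht)
  simpa [h.zero] using hmean

theorem hasFDerivAt_uncurry_zero (h : IsFlow Y ψ) (hY : ContDiff ℝ 1 Y) (z : E) :
    HasFDerivAt (fun p : ℝ × E => ψ p.1 p.2)
      ((ContinuousLinearMap.toSpanSingleton ℝ (Y z)).coprod (ContinuousLinearMap.id ℝ E))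
      (0, z) := by
  obtain ⟨C, hC⟩ := h.exists_eventually_norm_sub_sub_le hY z
  have hshift : HasFDerivAt (fun p : ℝ × E => ψ p.1 p.2 - ψ p.1 z - (p.2 - z))
      (0 : ℝ × E →L[ℝ] E) (0, z) := by
    refine .of_isLittleO (Asymptotics.IsBigO.trans_isLittleO (g := fun p => ‖p - (0, z)‖ ^ 2)
      (.of_bound |C| ?_) (Asymptotics.isLittleO_pow_sub_sub (0, z) one_lt_two))
    rw [nhds_prod_eq]
    filter_upwards [prod_mem_prod (ball_mem_nhds (0 : ℝ) one_pos) hC] with p hp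
    have hle := hp.2 p.1 (mem_ball_zero_iff.mp hp.1)
    have hfst : ‖p.1 - 0‖ ≤ ‖p - (0, z)‖ := norm_fst_le (p - (0, z))
    have hsnd : ‖p.2 - z‖ ≤ ‖p - (0, z)‖ := norm_snd_le (p - (0, z))
    calc _ = ‖ψ p.1 p.2 - ψ p.1 z - (p.2 - z)‖ := by simp [h.zero]
      _ ≤ C * ‖p.2 - z‖ * |p.1| := hle
      _ ≤ |C| * ‖p - (0, z)‖ * ‖p - (0, z)‖ := by
        rw [sub_zero, Real.norm_eq_abs] at hfst
        gcongr
        exact le_abs_self C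
      _ = |C| * ‖‖p - (0, z)‖ ^ 2‖ := by rw [norm_pow, norm_norm]; ring
  have horbit := (h.hasDerivAt z 0).hasFDerivAt.comp (0, z)
    (hasFDerivAt_fst (𝕜 := ℝ) (E := ℝ) (F := E))
  refine ((hshift.add horbit).add (hasFDerivAt_snd.sub_const z)).congr_of_eventuallyEq
    (.of_forall fun p => by dsimp; abel) |>.congr_fderiv ?_
  ext v <;> simp [h.zero]

theorem hasDerivAt_apply_curve (h : IsFlow Y ψ) (hY : ContDiff ℝ 1 Y) {c : ℝ → E} {v : E}
    (a : ℝ) (hc : HasDerivAt c v 0) :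
    HasDerivAt (fun s => ψ (a * s) (c s)) (a • Y (c 0) + v) 0 := by
  have hpair := ((hasDerivAt_id (0 : ℝ)).const_mul a).prodMk hc
  have hflow := h.hasFDerivAt_uncurry_zero hY (c 0)
  have hcomp := HasFDerivAt.comp_hasDerivAt (x := (0 : ℝ)) (f := fun s => (a * id s, c s))
    (l := fun p : ℝ × E => ψ p.1 p.2) (l' := _) (by simpa using hflow) hpair
  simpa [Function.comp_def] using hcomp

variable {M : ℝ → E × E → E × E}

theorem exists_isFlow_tangentField (h : IsFlow Y ψ) (hY : ContDiff ℝ 2 Y) :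
    ∃ M, IsFlow (tangentField Y) M := by
  have hY₁ : ContDiff ℝ 1 Y := hY.of_le one_le_two
  have := FiniteDimensional.proper_real E
  refine exists_isFlow_of_a_priori_bound (contDiff_tangentField hY) fun p T => ?_
  obtain ⟨R, hR⟩ := h.exists_norm_le p.1 T
  obtain ⟨K, hK⟩ := (isCompact_closedBall (0 : E) R).exists_bound_of_continuousOn
    (hY₁.continuous_fderiv one_ne_zero).continuousOn
  refine ⟨max R (‖p.2‖ * Real.exp (|K| * |T|)), fun S hS x hx₀ hx t ht => ?_⟩
  have hfst : ∀ s, |s| < S → ‖(x s).1‖ ≤ R := fun s hs => by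
    rw [h.eq_of_hasDerivAt hY₁ (x := fun s => (x s).1) (fun u hu => (hx u hu).fst) hs, hx₀]
    exact hR s (hs.trans_le hS)
  have hsnd := norm_le_gronwallBound_abs (h := fun s => (x s).2) (K := |K|) (ε := 0)
    (fun s hs => (hx s hs).snd)
    (fun s hs => by
      rw [add_zero]
      exact (fderiv ℝ Y (x s).1).le_of_opNorm_le
        ((hK _ (mem_closedBall_zero_iff.mpr (hfst s hs))).trans (le_abs_self K)) _) ht
  rw [gronwallBound_ε0, hx₀] at hsnd
  refine max_le_max (hfst t ht) (hsnd.trans ?_)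
  have htT : |t| ≤ |T| := (ht.le.trans hS).trans (le_abs_self T)
  gcongr

lemma fst_tangent (h : IsFlow Y ψ) (hY : ContDiff ℝ 1 Y) (hM : IsFlow (tangentField Y) M)
    (t : ℝ) (p : E × E) : (M t p).1 = ψ t p.1 := by
  have heq := h.eq_of_forall_hasDerivAt hY (x := fun s => (M s p).1)
    (fun s => (hM.hasDerivAt p s).fst) t
  rwa [hM.zero] at heq

lemma hasDerivAt_snd_tangent (h : IsFlow Y ψ) (hY : ContDiff ℝ 1 Y)
    (hM : IsFlow (tangentField Y) M) (z v : E) (t : ℝ) :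
    HasDerivAt (fun s => (M s (z, v)).2) (fderiv ℝ Y (ψ t z) (M t (z, v)).2) t := by
  rw [← h.fst_tangent hY hM t (z, v)]
  exact (hM.hasDerivAt (z, v) t).snd

lemma isLinearMap_snd_tangent (h : IsFlow Y ψ) (hY : ContDiff ℝ 2 Y)
    (hM : IsFlow (tangentField Y) M) (t : ℝ) (z : E) :
    IsLinearMap ℝ fun v => (M t (z, v)).2 := by
  have hY₁ : ContDiff ℝ 1 Y := hY.of_le one_le_two
  have hunique : ∀ {x : ℝ → E}, (∀ s, HasDerivAt x (fderiv ℝ Y (ψ s z) (x s)) s) →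
      x t = (M t (z, x 0)).2 := fun {x} hx => by
    have heq := hM.eq_of_forall_hasDerivAt (contDiff_tangentField hY) (x := fun s => (ψ s z, x s))
      (fun s => (h.hasDerivAt z s).prodMk (hx s)) t
    rw [h.zero] at heq
    exact congrArg Prod.snd heq
  have hderiv := h.hasDerivAt_snd_tangent hY₁ hM z
  constructor
  · intro v w
    have hadd := hunique (x := fun s => (M s (z, v)).2 + (M s (z, w)).2) fun s => by
      rw [map_add]; exact (hderiv v s).add (hderiv w s)
    simpa only [hM.zero] using hadd.symm
  · intro c v
    have hsmul := hunique (x := fun s => c • (M s (z, v)).2) fun s => by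
      rw [map_smul]; exact (hderiv v s).const_smul c
    simpa only [hM.zero] using hsmul.symm

end IsFlow

theorem exists_norm_sub_sub_fderiv_le {Y : E → E} (hY : ContDiff ℝ 2 Y) (R : ℝ) :
    ∃ K : ℝ≥0, ∀ a ∈ closedBall (0 : E) R, ∀ b ∈ closedBall (0 : E) R,
      ‖Y a - Y b - fderiv ℝ Y b (a - b)‖ ≤ K * ‖a - b‖ ^ 2 := by
  obtain ⟨K, hK⟩ := exists_lipschitzOnWith_closedBall
    (hY.fderiv_right one_add_one_eq_two.le : ContDiff ℝ 1 (fderiv ℝ Y)) R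
  refine ⟨K, fun a ha b hb => ?_⟩
  have hball := (convex_closedBall (0 : E) R).segment_subset hb ha
  have hmean := (convex_segment (𝕜 := ℝ) b a).norm_image_sub_le_of_norm_hasFDerivWithin_le'
    (f := Y) (φ := fderiv ℝ Y b) (C := K * ‖a - b‖)
    (fun x _ => (hY.differentiable two_ne_zero x).hasFDerivAt.hasFDerivWithinAt)
    (fun x hx => ?_) (left_mem_segment ℝ b a) (right_mem_segment ℝ b a)
  · rwa [mul_assoc, ← sq] at hmean
  · rw [← dist_eq_norm, ← dist_eq_norm, dist_comm a b]
    refine (hK.dist_le_mul x (hball hx) b hb).trans ?_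
    gcongr
    linarith [dist_add_dist_of_mem_segment hx, dist_nonneg (x := x) (y := a), dist_comm b x]

lemma gronwallBound_zero_left (K ε x : ℝ) :
    gronwallBound 0 K ε x = ε * gronwallBound 0 K 1 x := by
  unfold gronwallBound
  split_ifs <;> ring

namespace IsFlow

variable {Y : E → E} {ψ : ℝ → E → E} {M : ℝ → E × E → E × E}

theorem exists_eventually_norm_sub_le_sq (h : IsFlow Y ψ) (hY : ContDiff ℝ 2 Y)
    (hM : IsFlow (tangentField Y) M) (t : ℝ) (z : E) :
    ∃ C : ℝ, ∀ᶠ w in 𝓝 z, ‖ψ t w - ψ t z - (M t (z, w - z)).2‖ ≤ C * ‖w - z‖ ^ 2 := by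
  have hY₁ : ContDiff ℝ 1 Y := hY.of_le one_le_two
  have := FiniteDimensional.proper_real E
  obtain ⟨R, P, _, hbounds⟩ := h.exists_eventually_bounds hY₁ z (|t| + 1)
  obtain ⟨K, hK⟩ := (isCompact_closedBall (0 : E) R).exists_bound_of_continuousOn
    (hY₁.continuous_fderiv one_ne_zero).continuousOn
  obtain ⟨C, hC⟩ := exists_norm_sub_sub_fderiv_le hY R
  refine ⟨C * P ^ 2 * gronwallBound 0 K 1 |t|, hbounds.mono fun w hw => ?_⟩
  have hgrowth : ∀ s, |s| < |t| + 1 →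
      ‖Y (ψ s w) - Y (ψ s z) - fderiv ℝ Y (ψ s z) (M s (z, w - z)).2‖ ≤
        K * ‖ψ s w - ψ s z - (M s (z, w - z)).2‖ + C * (P * ‖w - z‖) ^ 2 := fun s hs => by
    have hmem : ψ s z ∈ closedBall 0 R :=
      mem_closedBall_zero_iff.mpr (hbounds.self_of_nhds s hs).1
    have hsplit : Y (ψ s w) - Y (ψ s z) - fderiv ℝ Y (ψ s z) (M s (z, w - z)).2 =
        fderiv ℝ Y (ψ s z) (ψ s w - ψ s z - (M s (z, w - z)).2) +
          (Y (ψ s w) - Y (ψ s z) - fderiv ℝ Y (ψ s z) (ψ s w - ψ s z)) := by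
      simp only [map_sub]; abel
    rw [hsplit]
    refine (norm_add_le _ _).trans (add_le_add
      ((fderiv ℝ Y (ψ s z)).le_of_opNorm_le (hK _ hmem) _)
      ((hC _ (mem_closedBall_zero_iff.mpr (hw s hs).1) _ hmem).trans ?_))
    gcongr
    exact (hw s hs).2
  have hgronwall := norm_le_gronwallBound_abs (h := fun s => ψ s w - ψ s z - (M s (z, w - z)).2)
    (fun s _ => ((h.hasDerivAt w s).sub (h.hasDerivAt z s)).sub
      (h.hasDerivAt_snd_tangent hY₁ hM z (w - z) s)) hgrowth (lt_add_one |t|)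
  rw [h.zero, h.zero, hM.zero, sub_self, norm_zero, gronwallBound_zero_left] at hgronwall
  exact hgronwall.trans_eq (by ring)

theorem hasFDerivAt_apply (h : IsFlow Y ψ) (hY : ContDiff ℝ 2 Y)
    (hM : IsFlow (tangentField Y) M) (t : ℝ) (z : E) :
    HasFDerivAt (ψ t) (h.isLinearMap_snd_tangent hY hM t z).mk'.toContinuousLinearMap z := by
  obtain ⟨C, hC⟩ := h.exists_eventually_norm_sub_le_sq hY hM t z
  refine .of_isLittleO (Asymptotics.IsBigO.trans_isLittleO (g := fun w => ‖w - z‖ ^ 2)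
    (.of_bound C (hC.mono fun w hw => ?_)) (Asymptotics.isLittleO_pow_sub_sub z one_lt_two))
  simpa using hw

theorem tangent (h : IsFlow Y ψ) (hY : ContDiff ℝ 2 Y) :
    IsFlow (tangentField Y) fun t p => (ψ t p.1, fderiv ℝ (ψ t) p.1 p.2) := by
  obtain ⟨M, hM⟩ := h.exists_isFlow_tangentField hY
  have heq : M = fun t p => (ψ t p.1, fderiv ℝ (ψ t) p.1 p.2) := by
    funext t p
    refine Prod.ext (h.fst_tangent (hY.of_le one_le_two) hM t p) ?_
    rw [(h.hasFDerivAt_apply hY hM t p.1).fderiv]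
    rfl
  exact heq ▸ hM

theorem differentiable_apply (h : IsFlow Y ψ) (hY : ContDiff ℝ 2 Y) (t : ℝ) :
    Differentiable ℝ (ψ t) := by
  obtain ⟨M, hM⟩ := h.exists_isFlow_tangentField hY
  exact fun z => (h.hasFDerivAt_apply hY hM t z).differentiableAt

theorem contDiff_apply (h : IsFlow Y ψ) (hY : ContDiff ℝ 2 Y) (t : ℝ) : ContDiff ℝ 1 (ψ t) := by
  refine contDiff_one_iff_fderiv.mpr ⟨h.differentiable_apply hY t, ?_⟩
  refine continuous_clm_apply.mpr fun v => ?_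
  exact (((h.tangent hY).continuous_apply (contDiff_tangentField hY) t).comp
    (by fun_prop : Continuous fun z => (z, v))).snd

theorem contDiff (h : IsFlow Y ψ) (hY : ContDiff ℝ 2 Y) :
    ContDiff ℝ 1 fun p : ℝ × E => ψ p.1 p.2 := by
  have htime_one := contDiff_snd.comp (h.suspension.contDiff_apply
    (contDiff_const.prodMk (contDiff_fst.smul (hY.comp contDiff_snd))) 1)
  simpa [Function.comp_def] using htime_one

theorem hasDerivAt_fderiv_apply (h : IsFlow Y ψ) (hY : ContDiff ℝ 2 Y) (z v : E) (t : ℝ) :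
    HasDerivAt (fun s => fderiv ℝ (ψ s) z v) (fderiv ℝ Y (ψ t z) (fderiv ℝ (ψ t) z v)) t :=
  ((h.tangent hY).hasDerivAt (z, v) t).snd

lemma fderiv_neg_fderiv_apply (h : IsFlow Y ψ) (hY : ContDiff ℝ 2 Y) (t : ℝ) (z v : E) :
    fderiv ℝ (ψ (-t)) (ψ t z) (fderiv ℝ (ψ t) z v) = v := by
  have hinv : ψ (-t) ∘ ψ t = id := funext (h.neg_apply_apply (hY.of_le one_le_two) t)
  rw [← ContinuousLinearMap.comp_apply, ← fderiv_comp z (h.differentiable_apply hY (-t) _)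
    (h.differentiable_apply hY t z), hinv, fderiv_id, ContinuousLinearMap.id_apply]

/-- The Lie derivative of `X` along `Y`: read off from the flow of `tangentField Y` applied along
the curve `s ↦ (ψ s z, X (ψ s z))`. -/
theorem hasDerivAt_pullback (h : IsFlow Y ψ) (hY : ContDiff ℝ 2 Y) {X : E → E} {z : E}
    (hX : DifferentiableAt ℝ X z) :
    HasDerivAt (fun s => fderiv ℝ (ψ (-s)) (ψ s z) (X (ψ s z)))
      (VectorField.lieBracket ℝ Y X z) 0 := by
  have horbit := h.hasDerivAt z 0
  have hcurve := horbit.prodMk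
    (HasFDerivAt.comp_hasDerivAt (0 : ℝ) (by rw [h.zero]; exact hX.hasFDerivAt) horbit)
  have hpull := (h.tangent hY).hasDerivAt_apply_curve (contDiff_tangentField hY) (-1) hcurve
  simpa [tangentField, VectorField.lieBracket, h.zero, neg_add_eq_sub] using
    hpull.hasFDerivAt.snd.hasDerivAt

end IsFlow

end Flow

/-! ### Attainable sets and tangent vector fields -/

section Attainability

variable {ι E : Type*} {ψ : ι → ℝ → E → E} {x y z : E}

/-- `Attainable ψ x y` means that `y` is reached from `x` by following finitely many flows of the
family `ψ`, each forward in time. -/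
def Attainable (ψ : ι → ℝ → E → E) : E → E → Prop :=
  Relation.ReflTransGen fun z z' => ∃ i, ∃ t : ℝ, 0 ≤ t ∧ z' = ψ i t z

namespace Attainable

lemma tail_apply (h : Attainable ψ x y) (i : ι) {t : ℝ} (ht : 0 ≤ t) :
    Attainable ψ x (ψ i t y) :=
  Relation.ReflTransGen.tail h ⟨i, t, ht, rfl⟩

lemma map_eq {β : Type*} {f : E → β} (hf : ∀ i t z, f (ψ i t z) = f z) (h : Attainable ψ x y) :
    f y = f x := by
  induction h with
  | refl => rfl
  | tail _ hstep ih =>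
    obtain ⟨i, t, -, rfl⟩ := hstep
    rw [hf, ih]

lemma symm_of_neg (hinv : ∀ i t z, ψ i t (ψ i (-t) z) = z)
    (h : Attainable (fun i t => ψ i (-t)) x y) : Attainable ψ y x := by
  induction h with
  | refl => exact .refl
  | tail _ hstep ih =>
    obtain ⟨i, t, ht, rfl⟩ := hstep
    exact .head ⟨i, t, ht, (hinv i t _).symm⟩ ih

lemma mem_of_mapsTo {D : Set E} (hD : ∀ i t, 0 ≤ t → MapsTo (ψ i t) D D) (hx : x ∈ D)
    (h : Attainable ψ x y) : y ∈ D := by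
  induction h with
  | refl => exact hx
  | tail _ hstep ih =>
    obtain ⟨i, t, ht, rfl⟩ := hstep
    exact hD i t ht ih

end Attainable

variable [NormedAddCommGroup E] [NormedSpace ℝ E] {k : ℕ}

/-- `F` is a `k`-parameter family of points attainable from `x` for parameters near `w`, and is an
immersion at `w`. -/
structure IsAttainableImmersion (ψ : ι → ℝ → E → E) (x : E) (F : (Fin k → ℝ) → E)
    (w : Fin k → ℝ) : Prop where
  contDiff : ContDiff ℝ 1 F
  eventually_attainable : ∀ᶠ w' in 𝓝 w, Attainable ψ x (F w')
  injective_fderiv : Function.Injective (fderiv ℝ F w)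

/-- An attainable immersion whose number `k` of parameters cannot be raised by one: there is no
attainable immersion from the same point with `k + 1` parameters. -/
structure IsMaximalAttainableImmersion (ψ : ι → ℝ → E → E) (x : E) (F : (Fin k → ℝ) → E)
    (w : Fin k → ℝ) : Prop extends IsAttainableImmersion ψ x F w where
  not_succ : ∀ (G : (Fin (k + 1) → ℝ) → E) v, ¬ IsAttainableImmersion ψ x G v

lemma IsAttainableImmersion.eventually {F : (Fin k → ℝ) → E} {w : Fin k → ℝ}
    (h : IsAttainableImmersion ψ x F w) : ∀ᶠ w' in 𝓝 w, IsAttainableImmersion ψ x F w' := by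
  filter_upwards [(h.contDiff.continuous_fderiv one_ne_zero).continuousAt.eventually
    (ContinuousLinearMap.isOpen_injective.mem_nhds h.injective_fderiv),
    eventually_eventually_nhds.mpr h.eventually_attainable] with w' hinj hatt
  exact ⟨h.contDiff, hatt, hinj⟩

lemma IsMaximalAttainableImmersion.eventually {F : (Fin k → ℝ) → E} {w : Fin k → ℝ}
    (h : IsMaximalAttainableImmersion ψ x F w) :
    ∀ᶠ w' in 𝓝 w, IsMaximalAttainableImmersion ψ x F w' :=
  h.toIsAttainableImmersion.eventually.mono fun _ h' => ⟨h', h.not_succ⟩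

/-- The vector fields tangent at each point to every attainable immersion from `x` with a maximal
number of parameters. -/
def tangentFields (ψ : ι → ℝ → E → E) (x : E) : Submodule ℝ (E → E) where
  carrier := {Y | ∀ ⦃k⦄ ⦃F : (Fin k → ℝ) → E⦄ ⦃w⦄, IsMaximalAttainableImmersion ψ x F w →
    Y (F w) ∈ (fderiv ℝ F w).range}
  zero_mem' _ _ _ _ := zero_mem _
  add_mem' hY hZ _ _ _ hF := add_mem (hY hF) (hZ hF)
  smul_mem' c _ hY _ _ _ hF := Submodule.smul_mem _ c (hY hF)

lemma mem_tangentFields_of_forall_exists {Y : E → E}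
    (h : ∀ z, Y z ∈ (tangentFields ψ x).map (LinearMap.proj z)) : Y ∈ tangentFields ψ x := by
  intro k F w hF
  obtain ⟨Z, hZ, hZY⟩ := h (F w)
  exact hZY ▸ hZ hF

lemma smul_mem_tangentFields (g : E → ℝ) {Y : E → E} (hY : Y ∈ tangentFields ψ x) :
    (fun z => g z • Y z) ∈ tangentFields ψ x :=
  mem_tangentFields_of_forall_exists fun z =>
    ⟨g z • Y, (tangentFields ψ x).smul_mem (g z) hY, rfl⟩

variable {V : Type*} [NormedAddCommGroup V] [NormedSpace ℝ V]

lemma injective_coprod_toSpanSingleton_iff {M : V →L[ℝ] E} {c : E} :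
    Function.Injective (M.coprod (ContinuousLinearMap.toSpanSingleton ℝ c)) ↔
      Function.Injective M ∧ c ∉ M.range := by
  constructor
  · intro h
    refine ⟨fun a b hab => ?_, ?_⟩
    · simpa using @h (a, 0) (b, 0) (by simpa using hab)
    · rintro ⟨a, ha⟩
      have : (a, (0 : ℝ)) = (0, 1) := h (by simpa using ha)
      simp at this
  · rintro ⟨hM, hc⟩
    refine (injective_iff_map_eq_zero _).mpr fun ⟨a, r⟩ har => ?_
    have har : M a + r • c = 0 := har
    obtain rfl : r = 0 := by
      by_contra hr
      refine hc ((Submodule.smul_mem_iff _ hr).mp ⟨-a, ?_⟩)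
      rw [map_neg, neg_eq_iff_add_eq_zero]
      exact har
    rw [zero_smul, add_zero] at har
    rw [(map_eq_zero_iff M hM).mp har, Prod.mk_zero_zero]

lemma mem_tangentFields_of_smul_mem {g : E → ℝ} {Y Z : E → E} (hY : Continuous Y)
    (hgY : (fun z => g z • Y z) ∈ tangentFields ψ x) (hZ : Z ∈ tangentFields ψ x)
    (hg : ∀ γ : ℝ → E, HasDerivAt γ (Z (γ 0)) 0 → ∃ᶠ s in 𝓝 0, g (γ s) ≠ 0) :
    Y ∈ tangentFields ψ x := by
  intro k F w hF
  by_contra hYw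
  have hcont : Continuous fun w' =>
      (fderiv ℝ F w').coprod (ContinuousLinearMap.toSpanSingleton ℝ (Y (F w'))) := by
    simp only [← ContinuousLinearMap.comp_fst_add_comp_snd]
    exact ((hF.contDiff.continuous_fderiv one_ne_zero).clm_comp continuous_const).add
      (((ContinuousLinearMap.toSpanSingletonCLE (𝕜 := ℝ)).continuous.comp
        (hY.comp hF.contDiff.continuous)).clm_comp continuous_const)
  have htransverse : ∀ᶠ w' in 𝓝 w, Y (F w') ∉ (fderiv ℝ F w').range :=
    (hcont.continuousAt.eventually (ContinuousLinearMap.isOpen_injective.mem_nhds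
      (injective_coprod_toSpanSingleton_iff.mpr ⟨hF.injective_fderiv, hYw⟩))).mono
      fun w' h => (injective_coprod_toSpanSingleton_iff.mp h).2
  obtain ⟨a, ha⟩ := hZ hF
  have hline : HasDerivAt (fun s : ℝ => w + s • a) a 0 := by
    simpa using ((hasDerivAt_id (0 : ℝ)).smul_const a).const_add w
  have hline_tendsto : Tendsto (fun s : ℝ => w + s • a) (𝓝 0) (𝓝 w) := by
    simpa using hline.continuousAt.tendsto
  have hcurve : HasDerivAt (fun s : ℝ => F (w + s • a)) (Z (F (w + (0 : ℝ) • a))) 0 := by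
    rw [zero_smul, add_zero, ← ha]
    refine HasFDerivAt.comp_hasDerivAt (0 : ℝ) ?_ hline
    simpa using (hF.contDiff.differentiable one_ne_zero w).hasFDerivAt
  obtain ⟨s, hgs, hYs, hFs⟩ := ((hg _ hcurve).and_eventually
    (hline_tendsto.eventually (htransverse.and hF.eventually))).exists
  exact hYs ((Submodule.smul_mem_iff _ hgs).mp (hgY hFs))

section Flows

variable [FiniteDimensional ℝ E] {X : ι → E → E}

lemma IsAttainableImmersion.apply (hψ : ∀ i, IsFlow (X i) (ψ i)) (hX : ∀ i, ContDiff ℝ 2 (X i))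
    {F : (Fin k → ℝ) → E} {w : Fin k → ℝ} (hF : IsAttainableImmersion ψ x F w) (i : ι) {t : ℝ}
    (ht : 0 ≤ t) : IsAttainableImmersion ψ x (fun w' => ψ i t (F w')) w where
  contDiff := ((hψ i).contDiff_apply (hX i) t).comp hF.contDiff
  eventually_attainable := hF.eventually_attainable.mono fun _ h => h.tail_apply i ht
  injective_fderiv := by
    rw [fderiv_fun_comp w ((hψ i).differentiable_apply (hX i) t _)
      (hF.contDiff.differentiable one_ne_zero w)]
    exact (Function.LeftInverse.injective
      ((hψ i).fderiv_neg_fderiv_apply (hX i) t (F w))).comp hF.injective_fderiv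

/-- Pulled back to `z` along the flow of `X i`, the values of `Y` stay tangent to the immersion, so
their derivative at time `0` does too. -/
theorem lieBracket_mem_tangentFields (hψ : ∀ i, IsFlow (X i) (ψ i))
    (hX : ∀ i, ContDiff ℝ 2 (X i)) (i : ι) {Y : E → E} (hYd : Differentiable ℝ Y)
    (hY : Y ∈ tangentFields ψ x) : VectorField.lieBracket ℝ (X i) Y ∈ tangentFields ψ x := by
  intro k F w hF
  have hpull_mem : ∀ s : ℝ, 0 ≤ s →
      fderiv ℝ (ψ i (-s)) (ψ i s (F w)) (Y (ψ i s (F w))) ∈ (fderiv ℝ F w).range := fun s hs => by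
    obtain ⟨b, hb⟩ := hY ⟨hF.apply hψ hX i hs, hF.not_succ⟩
    rw [fderiv_fun_comp w ((hψ i).differentiable_apply (hX i) s _)
      (hF.contDiff.differentiable one_ne_zero w)] at hb
    exact ⟨b, by rw [← hb]; exact ((hψ i).fderiv_neg_fderiv_apply (hX i) s _ _).symm⟩
  have hslope := (hasDerivAt_iff_tendsto_slope.mp
    ((hψ i).hasDerivAt_pullback (hX i) (hYd (F w)))).mono_left (nhdsGT_le_nhdsNE 0)
  refine (Submodule.closed_of_finiteDimensional _).mem_of_tendsto hslope ?_
  filter_upwards [self_mem_nhdsWithin] with s hs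
  exact Submodule.smul_mem _ _ (sub_mem (hpull_mem s (mem_Ioi.mp hs).le) (hpull_mem 0 le_rfl))

/-- A field transverse to an attainable immersion lets its time be added as a new parameter. -/
lemma IsAttainableImmersion.exists_succ (hψ : ∀ i, IsFlow (X i) (ψ i))
    (hX : ∀ i, ContDiff ℝ 2 (X i)) {F : (Fin k → ℝ) → E} {w : Fin k → ℝ}
    (hF : IsAttainableImmersion ψ x F w) {i : ι} (hi : X i (F w) ∉ (fderiv ℝ F w).range) :
    ∃ (G : (Fin (k + 1) → ℝ) → E) (v : Fin (k + 1) → ℝ), IsAttainableImmersion ψ x G v := by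
  let G : (Fin k → ℝ) × ℝ → E := fun p => ψ i p.2 (F p.1)
  have hG : ContDiff ℝ 1 G := ((hψ i).contDiff (hX i)).comp
    (contDiff_snd.prodMk (hF.contDiff.comp contDiff_fst))
  have hG' : fderiv ℝ G (w, 0) =
      (fderiv ℝ F w).coprod (ContinuousLinearMap.toSpanSingleton ℝ (X i (F w))) := by
    have hpair : HasFDerivAt (fun p : (Fin k → ℝ) × ℝ => (p.2, F p.1)) _ (w, 0) :=
      hasFDerivAt_snd.prodMk
        ((hF.contDiff.differentiable one_ne_zero w).hasFDerivAt.comp (w, (0 : ℝ)) hasFDerivAt_fst)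
    refine (((hψ i).hasFDerivAt_uncurry_zero ((hX i).of_le one_le_two) (F w)).comp
      (w, (0 : ℝ)) hpair).fderiv.trans ?_
    ext v <;> simp
  have hinj_zero : Function.Injective (fderiv ℝ G (w, 0)) :=
    hG' ▸ injective_coprod_toSpanSingleton_iff.mpr ⟨hF.injective_fderiv, hi⟩
  have hinj : ∀ᶠ s in 𝓝[>] (0 : ℝ), Function.Injective (fderiv ℝ G (w, s)) := by
    have hcont : Continuous fun s : ℝ => fderiv ℝ G (w, s) :=
      (hG.continuous_fderiv one_ne_zero).comp (by fun_prop)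
    exact (hcont.continuousAt.eventually (ContinuousLinearMap.isOpen_injective.mem_nhds
      hinj_zero)).filter_mono nhdsWithin_le_nhds
  obtain ⟨s, hs, hs0⟩ := (hinj.and self_mem_nhdsWithin).exists
  let e : (Fin (k + 1) → ℝ) ≃L[ℝ] (Fin k → ℝ) × ℝ := ContinuousLinearEquiv.ofFinrankEq (by simp)
  refine ⟨G ∘ e, e.symm (w, s), hG.comp e.contDiff, ?_, ?_⟩
  · have he : Tendsto e (𝓝 (e.symm (w, s))) (𝓝 w ×ˢ 𝓝 s) := by
      simpa [nhds_prod_eq] using e.continuous.tendsto (e.symm (w, s))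
    filter_upwards [he.eventually (hF.eventually_attainable.prod_mk (eventually_gt_nhds hs0))]
      with v hv
    exact hv.1.tail_apply i hv.2.le
  · rw [fderiv_comp _ (hG.differentiable one_ne_zero _) e.differentiableAt, e.fderiv,
      e.apply_symm_apply]
    exact hs.comp e.injective

theorem mem_tangentFields (hψ : ∀ i, IsFlow (X i) (ψ i)) (hX : ∀ i, ContDiff ℝ 2 (X i)) (i : ι) :
    X i ∈ tangentFields ψ x := by
  intro k F w hF
  by_contra hi
  obtain ⟨G, v, hG⟩ := hF.exists_succ hψ hX hi
  exact hF.not_succ G v hG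

end Flows

theorem exists_isMaximalAttainableImmersion [FiniteDimensional ℝ E] (ψ : ι → ℝ → E → E) (x : E) :
    ∃ (k : ℕ) (F : (Fin k → ℝ) → E) (w : Fin k → ℝ), IsMaximalAttainableImmersion ψ x F w := by
  let NoImmersion : ℕ → Prop := fun k =>
    ∀ (F : (Fin k → ℝ) → E) (w : Fin k → ℝ), ¬ IsAttainableImmersion ψ x F w
  have hzero : ¬ NoImmersion 0 := fun h =>
    h (fun _ => x) 0
      ⟨contDiff_const, .of_forall fun _ => .refl, Function.injective_of_subsingleton _⟩
  have hlarge : NoImmersion (Module.finrank ℝ E + 1) := fun F w hF => by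
    simpa using LinearMap.finrank_le_finrank_of_injective (f := (fderiv ℝ F w).toLinearMap)
      hF.injective_fderiv
  obtain ⟨k, hk, hk'⟩ := Nat.exists_not_and_succ_of_not_zero_of_exists hzero ⟨_, hlarge⟩
  simp only [NoImmersion, not_forall, not_not] at hk
  obtain ⟨F, w, hF⟩ := hk
  exact ⟨k, F, w, hF, hk'⟩

/-- The interior of the set attainable from `x`, relative to the level set of `ℓ` through `x`. -/
def attainableInterior (ψ : ι → ℝ → E → E) (ℓ : E →L[ℝ] V) (x : E) : Set E :=
  {z | ℓ z = ℓ x ∧ ∀ᶠ y in 𝓝 z, ℓ y = ℓ x → Attainable ψ x y}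

/-- A maximal attainable immersion is open in the level set of `ℓ`. -/
theorem attainableInterior_nonempty [FiniteDimensional ℝ E] {ℓ : E →L[ℝ] V}
    (hℓ : ∀ i t z, ℓ (ψ i t z) = ℓ z)
    (htangent : ∀ v ∈ ℓ.ker, Function.const E v ∈ tangentFields ψ x) :
    (attainableInterior ψ ℓ x).Nonempty := by
  obtain ⟨k, F, w, hF⟩ := exists_isMaximalAttainableImmersion ψ x
  obtain ⟨C, hC⟩ := Submodule.exists_isCompl ℓ.ker
  let G : (Fin k → ℝ) × C → E := fun p => F p.1 + p.2
  have hG : HasStrictFDerivAt G ((fderiv ℝ F w).coprod C.subtypeL) (w, 0) := by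
    have hF' := (hF.contDiff.contDiffAt (x := w)).hasStrictFDerivAt one_ne_zero
    exact ((hF'.comp (w, (0 : C)) hasStrictFDerivAt_fst).add
      (C.subtypeL.hasStrictFDerivAt.comp (w, (0 : C)) hasStrictFDerivAt_snd)).congr_fderiv
      (by ext <;> simp)
  have hsurj : ((fderiv ℝ F w).coprod C.subtypeL).range = ⊤ := by
    have hrange : C.subtypeL.range = C := C.range_subtype
    rw [ContinuousLinearMap.range_coprod, eq_top_iff, ← hC.sup_eq_top, hrange]
    exact sup_le_sup_right (fun v hv => htangent v hv hF) C
  have hmap := hG.map_nhds_eq_of_surj hsurj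
  have hGw : G (w, 0) = F w := by simp [G]
  have hFx : ∀ {w'}, Attainable ψ x (F w') → ℓ (F w') = ℓ x := fun h => h.map_eq hℓ
  refine ⟨F w, hFx hF.eventually_attainable.self_of_nhds, ?_⟩
  rw [← hGw, ← hmap, eventually_map]
  filter_upwards [(continuous_fst.tendsto (w, (0 : C))).eventually hF.eventually_attainable]
    with ⟨w', c⟩ hw' hc
  have hker : (c : E) ∈ ℓ.ker := by simpa [G, hFx hw'] using hc
  simpa [G, Submodule.disjoint_def.mp hC.disjoint c hker c.2] using hw'

end Attainability

/-! ### Invariance of closed sets -/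

section Invariance

variable {E : Type*} [NormedAddCommGroup E] [NormedSpace ℝ E]

lemma frequently_slope_infDist_lt {D : Set E} {x γ : ℝ → E} {v v' : E} {t r : ℝ}
    (hx : HasDerivAt x v t) (hγ : HasDerivAt γ v' 0) (hγD : ∀ᶠ s in 𝓝[>] 0, γ s ∈ D)
    (hdist : infDist (x t) D = dist (x t) (γ 0)) (hr : ‖v - v'‖ < r) :
    ∃ᶠ s in 𝓝[>] t, (s - t)⁻¹ * (infDist (x s) D - infDist (x t) D) < r := by
  have hγt : HasDerivAt (fun s => γ (s - t)) v' t :=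
    HasDerivAt.comp_sub_const t t (by rwa [sub_self])
  have hshift : Tendsto (fun s => s - t) (𝓝[>] t) (𝓝[>] 0) := by
    refine tendsto_nhdsWithin_iff.mpr ⟨?_, ?_⟩
    · exact ((continuous_sub_right t).tendsto' t 0 (sub_self t)).mono_left nhdsWithin_le_nhds
    · filter_upwards [self_mem_nhdsWithin] with s hs using sub_pos.mpr (mem_Ioi.mp hs)
  have hslope := (hx.sub hγt).hasDerivWithinAt.liminf_right_slope_norm_le hr
  refine (hslope.and_eventually ((hshift.eventually hγD).and self_mem_nhdsWithin)).mono ?_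
  rintro s ⟨hlt, hs, hts⟩
  refine lt_of_le_of_lt ?_ hlt
  have : 0 ≤ (s - t)⁻¹ := inv_nonneg.mpr (sub_pos.mpr hts).le
  rw [hdist]
  gcongr
  · simpa [dist_eq_norm] using infDist_le_dist_of_mem (x := x s) hs
  · simp [dist_eq_norm]

variable [FiniteDimensional ℝ E] {Y Y₁ Y₂ : E → E} {ψ ψ₁ ψ₂ : ℝ → E → E} {D : Set E}

namespace IsFlow

/-- Nagumo's theorem. The distance `r` from an orbit to `D` satisfies `r' ≤ K * r`, as is seen by
comparing the orbit with a curve in `D` that starts at a nearest point of `D`. -/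
theorem mapsTo_of_tangent (h : IsFlow Y ψ) (hY : ContDiff ℝ 1 Y) (hD : IsClosed D)
    (htangent : ∀ y ∈ D, ∃ γ : ℝ → E,
      γ 0 = y ∧ HasDerivAt γ (Y y) 0 ∧ ∀ᶠ s in 𝓝[>] 0, γ s ∈ D)
    {t : ℝ} (ht : 0 ≤ t) : MapsTo (ψ t) D D := by
  intro x hx
  obtain ⟨R, hR⟩ := h.exists_norm_le x (t + 1)
  obtain ⟨K, hK⟩ := exists_lipschitzOnWith_closedBall hY (3 * R)
  have hxR : ‖x‖ ≤ R := by simpa [h.zero] using hR 0 (by simpa using by linarith)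
  have hgronwall := le_gronwallBound_of_liminf_deriv_right_le (δ := 0) (K := K) (ε := 0)
    (f := fun s => infDist (ψ s x) D) (f' := fun s => K * infDist (ψ s x) D) (a := 0) (b := t)
    ((continuous_infDist_pt D).comp (continuous_iff_continuousAt.mpr
      fun s => (h.hasDerivAt x s).continuousAt)).continuousOn ?_
    (by rw [h.zero, infDist_zero_of_mem hx]) (fun s _ => by rw [add_zero]) t ⟨ht, le_rfl⟩
  · rw [gronwallBound_ε0_δ0] at hgronwall
    rw [← hD.closure_eq, mem_closure_iff_infDist_zero ⟨x, hx⟩]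
    exact hgronwall.antisymm infDist_nonneg
  · intro s hs r hr
    have hsR : ‖ψ s x‖ ≤ R := hR s (by rw [abs_of_nonneg hs.1]; linarith [hs.2])
    have := FiniteDimensional.proper_real E
    obtain ⟨y, hyD, hy⟩ := hD.exists_infDist_eq_dist ⟨x, hx⟩ (ψ s x)
    obtain ⟨γ, rfl, hγ, hγD⟩ := htangent y hyD
    refine frequently_slope_infDist_lt (h.hasDerivAt x s) hγ hγD hy (lt_of_le_of_lt ?_ hr)
    have hyx : ‖ψ s x - γ 0‖ ≤ ‖ψ s x - x‖ := by
      rw [← dist_eq_norm, ← dist_eq_norm, ← hy]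
      exact infDist_le_dist_of_mem hx
    have hyR : ‖γ 0‖ ≤ 3 * R := by
      linarith [norm_le_norm_add_norm_sub (ψ s x) (γ 0), norm_sub_le (ψ s x) x]
    rw [hy, dist_eq_norm]
    exact hK.norm_sub_le (mem_closedBall_zero_iff.mpr (by linarith [norm_nonneg (ψ s x)]))
      (mem_closedBall_zero_iff.mpr hyR)

/-- Nagumo's theorem applied to the curves `s ↦ ψ₁ (a * s) (ψ₂ (b * s) y)`. -/
theorem mapsTo_of_eq_add (h : IsFlow Y ψ) (hY : ContDiff ℝ 1 Y) (h₁ : IsFlow Y₁ ψ₁)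
    (hY₁ : ContDiff ℝ 1 Y₁) (h₂ : IsFlow Y₂ ψ₂) (hY₂ : ContDiff ℝ 1 Y₂) {a b : ℝ} (ha : 0 ≤ a)
    (hb : 0 ≤ b) (heq : ∀ z, Y z = a • Y₁ z + b • Y₂ z) (hD : IsClosed D)
    (hD₁ : ∀ t : ℝ, 0 ≤ t → MapsTo (ψ₁ t) D D) (hD₂ : ∀ t : ℝ, 0 ≤ t → MapsTo (ψ₂ t) D D)
    {t : ℝ} (ht : 0 ≤ t) : MapsTo (ψ t) D D := by
  refine h.mapsTo_of_tangent hY hD (fun y hy => ?_) ht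
  have hinner := h₂.hasDerivAt_apply_curve hY₂ b (hasDerivAt_const (0 : ℝ) y)
  have hcurve := h₁.hasDerivAt_apply_curve hY₁ a hinner
  simp only [mul_zero, h₂.zero, add_zero, ← heq] at hcurve
  refine ⟨_, by simp [h₁.zero, h₂.zero], hcurve, ?_⟩
  filter_upwards [self_mem_nhdsWithin] with s hs
  exact hD₁ _ (mul_nonneg ha (mem_Ioi.mp hs).le) (hD₂ _ (mul_nonneg hb (mem_Ioi.mp hs).le) hy)

end IsFlow

end Invariance

section Recurrence

variable {α : Type*} [TopologicalSpace α] [MeasurableSpace α] [OpensMeasurableSpace α]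

/-- Poincaré recurrence. -/
theorem preimage_subset_closure_of_mapsTo {μ : Measure α} [μ.IsOpenPosMeasure] {T : α → α}
    (hT : MeasurePreserving T μ μ) (hTc : Continuous T) {W : Set α} (hW : IsOpen W)
    (hfin : μ W ≠ ⊤) (hmaps : MapsTo T W W) : T ⁻¹' W ⊆ closure W := by
  have hpre : μ (T ⁻¹' W) = μ W := hT.measure_preimage hW.measurableSet.nullMeasurableSet
  have hnull : μ (T ⁻¹' W \ W) = 0 := by
    rw [measure_sdiff (show W ⊆ T ⁻¹' W from hmaps) hW.measurableSet.nullMeasurableSet hfin,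
      hpre, tsub_self]
  have hempty : T ⁻¹' W \ closure W = ∅ :=
    ((hW.preimage hTc).sdiff isClosed_closure).eq_empty_of_measure_zero
      (measure_mono_null (sdiff_subset_sdiff_right subset_closure) hnull)
  exact sdiff_eq_empty.mp hempty

end Recurrence

section AttainableClosure

variable {ι E V : Type*} [NormedAddCommGroup E] [NormedSpace ℝ E] [NormedAddCommGroup V]
  [NormedSpace ℝ V] {ψ : ι → ℝ → E → E} {ℓ : E →L[ℝ] V} {x y z : E}

lemma attainable_of_mem_attainableInterior (h : z ∈ attainableInterior ψ ℓ x) :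
    Attainable ψ x z :=
  h.2.self_of_nhds h.1

lemma mapsTo_attainableInterior (hcont : ∀ i t, Continuous (ψ i t))
    (hinv : ∀ i t z, ψ i t (ψ i (-t) z) = z) (hℓ : ∀ i t z, ℓ (ψ i t z) = ℓ z) (i : ι) {t : ℝ}
    (ht : 0 ≤ t) :
    MapsTo (ψ i t) (attainableInterior ψ ℓ x) (attainableInterior ψ ℓ x) := by
  rintro z ⟨hzx, hz⟩
  refine ⟨(hℓ i t z).trans hzx, ?_⟩
  have hback : Tendsto (ψ i (-t)) (𝓝 (ψ i t z)) (𝓝 z) := by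
    have hleft : ψ i (-t) (ψ i t z) = z := by simpa using hinv i (-t) z
    simpa [hleft] using (hcont i (-t)).tendsto (ψ i t z)
  filter_upwards [hback.eventually hz] with y hy hyx
  simpa [hinv] using (hy ((hℓ i (-t) y).trans hyx)).tail_apply i ht

lemma isOpen_preimage_attainableInterior {P : E → E} (hP : Continuous P)
    (hℓ : ∀ z, ℓ (P z) = ℓ x) : IsOpen (P ⁻¹' attainableInterior ψ ℓ x) := by
  refine isOpen_iff_mem_nhds.mpr fun z hz => ?_
  filter_upwards [hP.continuousAt.eventually (eventually_eventually_nhds.mpr hz.2)] with y hy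
  exact ⟨hℓ y, hy⟩

lemma Attainable.eventually_mem {D : Set E} (hcont : ∀ i t, Continuous (ψ i t))
    (hinv : ∀ i t z, ψ i (-t) (ψ i t z) = z) (hℓ : ∀ i t z, ℓ (ψ i t z) = ℓ z)
    (hD : ∀ i t, 0 ≤ t → MapsTo (ψ i (-t)) D D) {c : V} (h : Attainable ψ x y)
    (hy : ∀ᶠ y' in 𝓝 y, ℓ y' = c → y' ∈ D) : ∀ᶠ x' in 𝓝 x, ℓ x' = c → x' ∈ D := by
  induction h using Relation.ReflTransGen.head_induction_on with
  | refl => exact hy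
  | head hstep _ ih =>
    obtain ⟨i, t, ht, rfl⟩ := hstep
    filter_upwards [((hcont i t).tendsto _).eventually ih] with z hz hzc
    simpa [hinv] using hD i t ht (hz ((hℓ i t z).trans hzc))

/-- The closure of the interior of the attainable set is open and closed in the connected level set
of `ℓ`. -/
theorem mem_closure_attainableInterior (hcont : ∀ i t, Continuous (ψ i t))
    (hinv : ∀ i t z, ψ i t (ψ i (-t) z) = z) (hℓ : ∀ i t z, ℓ (ψ i t z) = ℓ z)
    (hne : ∀ z, ℓ z = ℓ x → (attainableInterior ψ ℓ z).Nonempty)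
    (hclosure : ∀ i t, 0 ≤ t → MapsTo (ψ i (-t)) (closure (attainableInterior ψ ℓ x))
      (closure (attainableInterior ψ ℓ x)))
    (hy : ℓ y = ℓ x) : y ∈ closure (attainableInterior ψ ℓ x) := by
  set D := closure (attainableInterior ψ ℓ x)
  have hforward : ∀ i t, 0 ≤ t → MapsTo (ψ i t) D D := fun i t ht =>
    (mapsTo_attainableInterior hcont hinv hℓ i ht).closure (hcont i t)
  have hopen : ∀ z ∈ D, ℓ z = ℓ x → ∀ᶠ z' in 𝓝 z, ℓ z' = ℓ x → z' ∈ D := fun z hzD hzx => by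
    obtain ⟨w, hw⟩ := hne z hzx
    refine (attainable_of_mem_attainableInterior hw).eventually_mem hcont
      (fun i t z => by simpa using hinv i (-t) z) hℓ hclosure ?_
    filter_upwards [hw.2] with w' hw' hwx
    exact (hw' (hwx.trans hzx.symm)).mem_of_mapsTo hforward hzD
  let S := {z : E | ℓ z = ℓ x}
  have hconvex : Convex ℝ S := (convex_singleton (ℓ x)).linear_preimage ℓ.toLinearMap
  have : PreconnectedSpace S := Subtype.preconnectedSpace hconvex.isPreconnected
  have hclopen : IsClopen ((↑) ⁻¹' D : Set S) := by
    refine ⟨isClosed_closure.preimage continuous_subtype_val, isOpen_iff_mem_nhds.mpr ?_⟩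
    rintro ⟨z, hzx⟩ hzD
    filter_upwards [continuous_subtype_val.continuousAt.eventually (hopen z hzD hzx)] with z' hz'
    exact hz' z'.2
  obtain ⟨w, hw⟩ := hne x rfl
  have huniv := hclopen.eq_univ ⟨⟨w, hw.1⟩, subset_closure hw⟩
  exact huniv.ge (mem_univ (⟨y, hy⟩ : S))

/-- `y` is reached through a point of the interior of the attainable set, which the family
reversed in time attains from `y`. -/
theorem attainable_of_mapsTo_closure (hcont : ∀ i t, Continuous (ψ i t))
    (hinv : ∀ i t z, ψ i t (ψ i (-t) z) = z) (hℓ : ∀ i t z, ℓ (ψ i t z) = ℓ z)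
    (hne : ∀ z, ℓ z = ℓ x → (attainableInterior ψ ℓ z).Nonempty)
    (hne_neg : ∀ z, ℓ z = ℓ x → (attainableInterior (fun i t => ψ i (-t)) ℓ z).Nonempty)
    (hclosure : ∀ i t, 0 ≤ t → MapsTo (ψ i (-t)) (closure (attainableInterior ψ ℓ x))
      (closure (attainableInterior ψ ℓ x)))
    (hy : ℓ y = ℓ x) : Attainable ψ x y := by
  obtain ⟨w, hwy, hw⟩ := hne_neg y hy
  have hwx := mem_closure_attainableInterior hcont hinv hℓ hne hclosure (hwy.trans hy)
  obtain ⟨z, hzw, hz⟩ := mem_closure_iff_nhds.mp hwx _ hw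
  exact (attainable_of_mem_attainableInterior hz).trans
    ((hzw (hz.1.trans hy.symm)).symm_of_neg hinv)

end AttainableClosure

section Liouville

lemma hasDerivAt_det_of_eq_one {m : Type*} [Fintype m] [DecidableEq m] {M : ℝ → Matrix m m ℝ}
    {M' : Matrix m m ℝ} {t : ℝ} (hM : ∀ i j, HasDerivAt (fun s => M s i j) (M' i j) t)
    (hone : M t = 1) : HasDerivAt (fun s => (M s).det) M'.trace t := by
  have hdet : ∀ {A : ℝ → Matrix m m ℝ} {r : ℝ}, A r = 1 →
      (∀ i j, HasDerivAt (fun s => A s i j) (M' i j) r) →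
      HasDerivAt (fun s => (A s).det) (∑ σ : Equiv.Perm m, Equiv.Perm.sign σ •
        ∑ i, (∏ j ∈ Finset.univ.erase i, (1 : Matrix m m ℝ) (σ j) j) • M' (σ i) i) r := by
    intro A r hA hA'
    simp only [Matrix.det_apply, ← hA]
    exact HasDerivAt.fun_sum fun σ _ =>
      (HasDerivAt.fun_finsetProd fun i _ => hA' (σ i) i).const_smul _
  have hline : HasDerivAt (fun s : ℝ => (1 + s • M').det) M'.trace 0 := by
    have hpoly := (1 + (Polynomial.X : Polynomial ℝ) • M'.map Polynomial.C).det.hasDerivAt 0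
    rw [Matrix.derivative_det_one_add_X_smul] at hpoly
    simpa [eval_det, ← Matrix.smul_eq_mul_diagonal] using hpoly
  rw [hline.unique (hdet (by simp) fun i j => ?_)]
  · exact hdet hone hM
  · simpa using ((hasDerivAt_id (0 : ℝ)).mul_const (M' i j)).const_add ((1 : Matrix m m ℝ) i j)

variable {E : Type*} [NormedAddCommGroup E] [NormedSpace ℝ E] [FiniteDimensional ℝ E]

lemma hasDerivAt_det_of_eq_id {A : ℝ → E →L[ℝ] E} {A' : E →L[ℝ] E} {t : ℝ}
    (hA : ∀ v, HasDerivAt (fun s => A s v) (A' v) t) (hid : A t = ContinuousLinearMap.id ℝ E) :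
    HasDerivAt (fun s => (A s).det) (LinearMap.trace ℝ E A') t := by
  let b := Module.finBasis ℝ E
  simp only [ContinuousLinearMap.det, ← LinearMap.det_toMatrix b,
    LinearMap.trace_eq_matrix_trace ℝ b]
  refine hasDerivAt_det_of_eq_one (fun i j => ?_) (by simp [hid])
  simp only [LinearMap.toMatrix_apply, ← Module.Basis.coord_apply]
  exact (b.coord i).toContinuousLinearMap.hasFDerivAt.comp_hasDerivAt t (hA (b j))

variable {Y : E → E} {ψ : ℝ → E → E}

namespace IsFlow

lemma det_fderiv_of_trace_eq_zero (h : IsFlow Y ψ) (hY : ContDiff ℝ 2 Y)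
    (htrace : ∀ z, LinearMap.trace ℝ E (fderiv ℝ Y z) = 0) (t : ℝ) (z : E) :
    (fderiv ℝ (ψ t) z).det = 1 := by
  have hY₁ : ContDiff ℝ 1 Y := hY.of_le one_le_two
  have hzero : fderiv ℝ (ψ 0) = fun _ => ContinuousLinearMap.id ℝ E := by
    rw [show ψ 0 = id from funext h.zero]
    exact funext fun w => fderiv_id
  have hmul : ∀ s r, (fderiv ℝ (ψ s) z).det =
      (fderiv ℝ (ψ (s - r)) (ψ r z)).det * (fderiv ℝ (ψ r) z).det := fun s r => by
    have hcomp : ψ s = ψ (s - r) ∘ ψ r := funext fun w => by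
      rw [Function.comp_apply, ← h.add hY₁, sub_add_cancel]
    rw [hcomp, fderiv_comp z (h.differentiable_apply hY _ _) (h.differentiable_apply hY _ _)]
    exact LinearMap.det_comp _ _
  have hderiv : ∀ r, HasDerivAt (fun s => (fderiv ℝ (ψ s) z).det) 0 r := fun r => by
    have hdet : HasDerivAt (fun s => (fderiv ℝ (ψ s) (ψ r z)).det) 0 (r - r) := by
      rw [sub_self]
      refine (hasDerivAt_det_of_eq_id (A' := fderiv ℝ Y (ψ r z)) (fun v => ?_)
        (congrFun hzero (ψ r z))).congr_deriv (htrace _)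
      refine (h.hasDerivAt_fderiv_apply hY (ψ r z) v 0).congr_deriv ?_
      rw [hzero, h.zero, ContinuousLinearMap.id_apply]
    simpa only [zero_mul, ← hmul] using
      (hdet.comp_sub_const r r).mul_const (fderiv ℝ (ψ r) z).det
  rw [is_const_of_deriv_eq_zero (fun r => (hderiv r).differentiableAt) (fun r => (hderiv r).deriv)
    t 0, hzero]
  exact LinearMap.det_id

/-- Liouville's theorem. -/
theorem measurePreserving [MeasurableSpace E] [BorelSpace E] (μ : Measure E) [μ.IsAddHaarMeasure]
    (h : IsFlow Y ψ) (hY : ContDiff ℝ 2 Y)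
    (htrace : ∀ z, LinearMap.trace ℝ E (fderiv ℝ Y z) = 0) (t : ℝ) :
    MeasurePreserving (ψ t) μ μ := by
  have hY₁ : ContDiff ℝ 1 Y := hY.of_le one_le_two
  refine ⟨(h.continuous_apply hY₁ t).measurable, Measure.ext fun s hs => ?_⟩
  have hpre : ψ t ⁻¹' s = ψ (-t) '' s :=
    (congrFun (image_eq_preimage_of_inverse (h.apply_neg_apply hY₁ t) (h.neg_apply_apply hY₁ t))
      s).symm
  rw [Measure.map_apply (h.continuous_apply hY₁ t).measurable hs, hpre,
    ← lintegral_abs_det_fderiv_eq_addHaar_image μ hs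
      (fun z _ => (h.differentiable_apply hY (-t) z).hasFDerivAt.hasFDerivWithinAt)
      (Function.LeftInverse.injective (h.apply_neg_apply hY₁ t)).injOn]
  simp [h.det_fderiv_of_trace_eq_zero hY htrace]

end IsFlow

end Liouville

section Analytic

lemma mem_of_forall_iteratedDeriv_mem {E : Type*} [NormedAddCommGroup E] [NormedSpace ℝ E]
    [FiniteDimensional ℝ E] {S : Submodule ℝ E} {c : ℝ → E} {s₀ : ℝ} (hc : AnalyticOnNhd ℝ c univ)
    (hmem : ∀ i, iteratedDeriv i c s₀ ∈ S) (s : ℝ) : c s ∈ S := by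
  by_contra hs
  obtain ⟨f, hfs, hf⟩ := Submodule.exists_le_ker_of_notMem hs
  let L := f.toContinuousLinearMap
  have hLc : AnalyticOnNhd ℝ (L ∘ c) univ := L.comp_analyticOnNhd hc
  have hderiv : ∀ i, iteratedDeriv i (L ∘ c) s₀ = 0 := fun i => by
    rw [iteratedDeriv_eq_iteratedFDeriv, L.iteratedFDeriv_comp_left
      (hc s₀ (mem_univ s₀)).contDiffAt le_rfl]
    exact hf (hmem i)
  have horder : analyticOrderAt (L ∘ c) s₀ = ⊤ := ENat.eq_top_iff_forall_ge.mpr fun m =>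
    (natCast_le_analyticOrderAt_iff_iteratedDeriv_eq_zero (hLc s₀ (mem_univ s₀))).mpr
      fun i _ => hderiv i
  exact hfs (congrFun
    (hLc.eq_of_eventuallyEq analyticOnNhd_const (analyticOrderAt_eq_top.mp horder)) s)

lemma exists_symmetry_of_linear_relation {g : ℝ → ℝ} {a b c₁ c₂ : ℝ} (hc : c₁ ≠ 0)
    (h : ∀ s, c₁ * g (a + s) + c₂ * g (b - s) = 0) :
    ∃ m, (∀ t, g (m + t) = g (m - t)) ∨ ∀ t, g (m + t) = -g (m - t) := by
  obtain ⟨m, hm⟩ : ∃ m, a + b = 2 * m := ⟨(a + b) / 2, by ring⟩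
  have hrefl : ∀ t, g (m + t) = -(c₂ / c₁) * g (m - t) := fun t => by
    have hs := h (m - a + t)
    rw [show a + (m - a + t) = m + t by ring,
      show b - (m - a + t) = m - t by linear_combination hm] at hs
    field_simp
    linarith
  have htwice : ∀ t, ((c₂ / c₁) ^ 2 - 1) * g (m + t) = 0 := fun t => by
    have hback := hrefl (-t)
    rw [← sub_eq_add_neg, sub_neg_eq_add] at hback
    linear_combination -hrefl t + c₂ / c₁ * hback
  refine ⟨m, ?_⟩
  by_cases hκ : (c₂ / c₁) ^ 2 = 1
  · rcases sq_eq_one_iff.mp hκ with hκ | hκ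
    · exact .inr fun t => by simpa [hκ] using hrefl t
    · exact .inl fun t => by simpa [hκ] using hrefl t
  · have hg : ∀ t, g (m + t) = 0 := fun t =>
      (mul_eq_zero.mp (htwice t)).resolve_left (sub_ne_zero.mpr hκ)
    exact .inl fun t => by rw [hg, sub_eq_add_neg, hg]

variable {E F : Type*} [NormedAddCommGroup E] [NormedSpace ℝ E] [NormedAddCommGroup F]
  [NormedSpace ℝ F] [CompleteSpace F]

lemma analyticOnNhd_iterate_fderiv_apply {Y : E → F} (hY : AnalyticOnNhd ℝ Y univ) (e : E) (i : ℕ) :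
    AnalyticOnNhd ℝ ((fun X z => fderiv ℝ X z e)^[i] Y) univ := by
  induction i with
  | zero => exact hY
  | succ i ih =>
    rw [Function.iterate_succ_apply']
    exact (ContinuousLinearMap.apply ℝ F e).comp_analyticOnNhd ih.fderiv

lemma iteratedDeriv_comp_add_smul {Y : E → F} (hY : AnalyticOnNhd ℝ Y univ) (z e : E) (i : ℕ) :
    iteratedDeriv i (fun s : ℝ => Y (z + s • e)) =
      fun s => (fun X z => fderiv ℝ X z e)^[i] Y (z + s • e) := by
  induction i with
  | zero => rw [iteratedDeriv_zero, Function.iterate_zero_apply]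
  | succ i ih =>
    rw [iteratedDeriv_succ, ih, Function.iterate_succ_apply']
    funext s
    have hline : HasDerivAt (fun s : ℝ => z + s • e) e s := by
      simpa using ((hasDerivAt_id s).smul_const e).const_add z
    exact ((analyticOnNhd_iterate_fderiv_apply hY e i _
      (mem_univ _)).differentiableAt.hasFDerivAt.comp_hasDerivAt s hline).deriv

end Analytic

section TangentFields

variable {ι E : Type*} [NormedAddCommGroup E] [NormedSpace ℝ E] [FiniteDimensional ℝ E]
  {ψ : ι → ℝ → E → E} {x : E}

theorem comp_add_smul_mem_tangentFields {Y : E → E} {e : E} (hY : AnalyticOnNhd ℝ Y univ)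
    (hmem : Y ∈ tangentFields ψ x)
    (hfderiv : ∀ X : E → E, Differentiable ℝ X → X ∈ tangentFields ψ x →
      (fun z => fderiv ℝ X z e) ∈ tangentFields ψ x) (s : ℝ) :
    (fun z => Y (z + s • e)) ∈ tangentFields ψ x := by
  have := FiniteDimensional.complete ℝ E
  have hiter : ∀ i, (fun X z => fderiv ℝ X z e)^[i] Y ∈ tangentFields ψ x := fun i => by
    induction i with
    | zero => exact hmem
    | succ i ih =>
      rw [Function.iterate_succ_apply']
      exact hfderiv _ (fun z => (analyticOnNhd_iterate_fderiv_apply hY e i z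
        (mem_univ z)).differentiableAt) ih
  refine mem_tangentFields_of_forall_exists fun z => ?_
  have hline : AnalyticOnNhd ℝ (fun s : ℝ => Y (z + s • e)) univ := fun s _ =>
    (hY _ (mem_univ _)).comp (by fun_prop)
  refine mem_of_forall_iteratedDeriv_mem (s₀ := 0) hline (fun i => ?_) s
  simp only [iteratedDeriv_comp_add_smul hY, zero_smul, add_zero]
  exact Submodule.mem_map_of_mem (hiter i)

end TangentFields

/-! ### The periodic particle system -/

section Drift

lemma norm_sub_le_mul_abs_of_hasDerivAt {F : Type*} [NormedAddCommGroup F] [NormedSpace ℝ F]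
    {f f' : ℝ → F} {C S t : ℝ} (hf : ∀ s, |s| < S → HasDerivAt f (f' s) s)
    (hbound : ∀ s, |s| < S → ‖f' s‖ ≤ C) (ht : |t| < S) : ‖f t - f 0‖ ≤ C * |t| := by
  have hmem : ∀ {s}, s ∈ ball (0 : ℝ) S ↔ |s| < S := by simp
  simpa using (convex_ball (0 : ℝ) S).norm_image_sub_le_of_norm_hasDerivWithin_le
    (fun s hs => (hf s (hmem.mp hs)).hasDerivWithinAt) (fun s hs => hbound s (hmem.mp hs))
    (mem_ball_self ((abs_nonneg t).trans_lt ht)) (hmem.mpr ht)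

variable {n : ℕ}

/-- The total momentum `p₁ + ⋯ + pₙ`. -/
def totalMomentum (n : ℕ) : State n →L[ℝ] ℝ :=
  (∑ k, ContinuousLinearMap.proj k).comp (ContinuousLinearMap.snd ℝ (Fin n → ℝ) (Fin n → ℝ))

lemma totalMomentum_apply (z : State n) : totalMomentum n z = ∑ k, z.2 k := by
  simp [totalMomentum]

variable [NeZero n] {Φ : ℝ → ℝ}

lemma Admissible.contDiff (hΦ : Admissible Φ) {m : WithTop ℕ∞} : ContDiff ℝ m Φ :=
  contDiff_iff_contDiffAt.mpr fun y => (hΦ.1 y).contDiffAt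

lemma Admissible.analyticOnNhd_deriv (hΦ : Admissible Φ) : AnalyticOnNhd ℝ (deriv Φ) univ :=
  fun y _ => (hΦ.1 y).deriv

lemma Admissible.contDiff_deriv (hΦ : Admissible Φ) {m : WithTop ℕ∞} : ContDiff ℝ m (deriv Φ) :=
  contDiff_iff_contDiffAt.mpr fun y => (hΦ.1 y).deriv.contDiffAt

lemma contDiff_drift {m : WithTop ℕ∞} (hφ : ContDiff ℝ m (deriv Φ)) :
    ContDiff ℝ m (drift n Φ) := by
  unfold drift
  fun_prop

lemma analyticOnNhd_drift (hφ : AnalyticOnNhd ℝ (deriv Φ) univ) :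
    AnalyticOnNhd ℝ (drift n Φ) univ := by
  have hq : ∀ i : Fin n, AnalyticOnNhd ℝ (fun z : State n => z.1 i) univ := fun i =>
    ((ContinuousLinearMap.proj i).comp
      (ContinuousLinearMap.fst ℝ (Fin n → ℝ) (Fin n → ℝ))).analyticOnNhd univ
  have hφq : ∀ i j : Fin n, AnalyticOnNhd ℝ (fun z : State n => deriv Φ (z.1 i - z.1 j)) univ :=
    fun i j => hφ.comp ((hq i).sub (hq j)) (mapsTo_univ _ _)
  exact (analyticOnNhd_snd).prod (analyticOnNhd_pi_iff.mpr fun k => (hφq _ _).sub (hφq _ _))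

lemma fderiv_drift (hφ : Differentiable ℝ (deriv Φ)) (z v : State n) :
    fderiv ℝ (drift n Φ) z v = (v.2, fun k =>
      deriv (deriv Φ) (z.1 (k - 1) - z.1 k) * (v.1 (k - 1) - v.1 k) -
        deriv (deriv Φ) (z.1 k - z.1 (k + 1)) * (v.1 k - v.1 (k + 1))) := by
  have hdrift : Differentiable ℝ (drift n Φ) := by
    unfold drift
    fun_prop
  have hline : HasDerivAt (fun s : ℝ => z + s • v) v 0 := by
    simpa using ((hasDerivAt_id (0 : ℝ)).smul_const v).const_add z
  have hdiff : ∀ i j : Fin n, HasDerivAt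
      (fun s : ℝ => deriv Φ ((z + s • v).1 i - (z + s • v).1 j))
      (deriv (deriv Φ) (z.1 i - z.1 j) * (v.1 i - v.1 j)) 0 := fun i j => by
    have hq := hasDerivAt_pi.mp hline.fst
    exact HasDerivAt.comp_of_eq (0 : ℝ) (hφ (z.1 i - z.1 j)).hasDerivAt
      ((hq i).fun_sub (hq j)) (by simp)
  refine HasDerivAt.unique ((hdrift z).hasFDerivAt.hasLineDerivAt v) (HasDerivAt.prodMk
    hline.snd (hasDerivAt_pi.mpr fun k => (hdiff (k - 1) k).fun_sub (hdiff k (k + 1))))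

lemma sum_mul_cyclic_sub (a u : Fin n → ℝ) :
    ∑ k, u k * (a (k - 1) - a k) = -∑ k, a k * (u k - u (k + 1)) := by
  have hshift : ∑ k, u k * a (k - 1) = ∑ k, u (k + 1) * a k := by
    rw [← Equiv.sum_comp (Equiv.addRight (1 : Fin n))]
    simp
  simp only [mul_sub, Finset.sum_sub_distrib, hshift]
  simp only [mul_comm]
  ring

lemma totalMomentum_drift (z : State n) : totalMomentum n (drift n Φ z) = 0 := by
  rw [totalMomentum_apply]
  simpa [drift] using sum_mul_cyclic_sub (fun k => deriv Φ (z.1 k - z.1 (k + 1))) (fun _ => 1)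

/-- The total energy of the free system. -/
def energy (n : ℕ) [NeZero n] (Φ : ℝ → ℝ) (z : State n) : ℝ :=
  ∑ k, z.2 k ^ 2 / 2 + ∑ k, Φ (z.1 k - z.1 (k + 1))

lemma continuous_energy (hΦ : Continuous Φ) : Continuous (energy n Φ) := by
  unfold energy
  fun_prop

lemma hasDerivAt_energy (hΦ : Differentiable ℝ Φ) {x : ℝ → State n} {t : ℝ}
    (hx : HasDerivAt x (drift n Φ (x t)) t) : HasDerivAt (fun s => energy n Φ (x s)) 0 t := by
  have hq := hasDerivAt_pi.mp hx.fst
  have hp := hasDerivAt_pi.mp hx.snd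
  have hkinetic := HasDerivAt.fun_sum (u := Finset.univ) fun k _ => ((hp k).pow 2).div_const 2
  have hpotential := HasDerivAt.fun_sum (u := Finset.univ) fun k _ =>
    (hΦ ((x t).1 k - (x t).1 (k + 1))).hasDerivAt.comp t ((hq k).sub (hq (k + 1)))
  refine (hkinetic.add hpotential).congr_deriv ?_
  have hparts := sum_mul_cyclic_sub (fun k => deriv Φ ((x t).1 k - (x t).1 (k + 1))) (x t).2
  simp only [sub_add_cancel] at hparts
  simp only [drift]
  rw [← neg_eq_iff_add_eq_zero.mp hparts.symm, add_comm]
  congr 1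
  exact Finset.sum_congr rfl fun k _ => by push_cast; ring

lemma add_le_sum_potential {m : ℝ} (hm : ∀ y, m ≤ Φ y) (z : State n) (k : Fin n) :
    Φ (z.1 k - z.1 (k + 1)) + (n - 1) * m ≤ ∑ k, Φ (z.1 k - z.1 (k + 1)) := by
  have hsingle := Finset.single_le_sum (f := fun k => Φ (z.1 k - z.1 (k + 1)) - m)
    (fun k _ => sub_nonneg.mpr (hm _)) (Finset.mem_univ k)
  simp only [Finset.sum_sub_distrib, Finset.sum_const, Finset.card_univ, Fintype.card_fin,
    nsmul_eq_mul] at hsingle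
  linarith

lemma sq_snd_le_energy {m : ℝ} (hm : ∀ y, m ≤ Φ y) (z : State n) (k : Fin n) :
    z.2 k ^ 2 ≤ 2 * (energy n Φ z - n * m) := by
  have hkinetic : z.2 k ^ 2 / 2 ≤ ∑ k, z.2 k ^ 2 / 2 :=
    Finset.single_le_sum (f := fun k => z.2 k ^ 2 / 2) (fun _ _ => by positivity)
      (Finset.mem_univ k)
  have hpotential := add_le_sum_potential hm z k
  have hk := hm (z.1 k - z.1 (k + 1))
  unfold energy
  linarith

lemma potential_le_energy {m : ℝ} (hm : ∀ y, m ≤ Φ y) (z : State n) (k : Fin n) :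
    Φ (z.1 k - z.1 (k + 1)) ≤ energy n Φ z - (n - 1) * m := by
  have hkinetic : 0 ≤ ∑ k, z.2 k ^ 2 / 2 := Finset.sum_nonneg fun _ _ => by positivity
  have hpotential := add_le_sum_potential hm z k
  unfold energy
  linarith

lemma norm_snd_le_sqrt_energy {m : ℝ} (hm : ∀ y, m ≤ Φ y) (z : State n) :
    ‖z.2‖ ≤ √(2 * (energy n Φ z - n * m)) :=
  (pi_norm_le_iff_of_nonneg (Real.sqrt_nonneg _)).mpr fun k =>
    Real.abs_le_sqrt (sq_snd_le_energy hm z k)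

theorem exists_isFlow_drift (n : ℕ) [NeZero n] (hΦ : ContDiff ℝ 2 Φ)
    (hbdd : BddBelow (range Φ)) : ∃ ψ, IsFlow (drift n Φ) ψ := by
  have hφ : ContDiff ℝ 1 (deriv Φ) := ContDiff.deriv' hΦ
  obtain ⟨m, hm⟩ := hbdd
  have hm : ∀ y, m ≤ Φ y := fun y => hm ⟨y, rfl⟩
  refine exists_isFlow_of_a_priori_bound (contDiff_drift hφ) fun z T => ?_
  set C := √(2 * (energy n Φ z - n * m)) with hC
  refine ⟨max (‖z.1‖ + C * T) C, fun S hS x hx₀ hx t ht => ?_⟩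
  have henergy : ∀ s, |s| < S → energy n Φ (x s) = energy n Φ z := fun s hs => by
    have hsub := norm_sub_le_mul_abs_of_hasDerivAt (C := 0)
      (fun r hr => hasDerivAt_energy (hΦ.differentiable two_ne_zero) (hx r hr))
      (fun _ _ => norm_zero.le) hs
    rwa [zero_mul, norm_le_zero_iff, sub_eq_zero, hx₀] at hsub
  have hsnd : ∀ s, |s| < S → ‖(x s).2‖ ≤ C := fun s hs => by
    rw [hC, ← henergy s hs]
    exact norm_snd_le_sqrt_energy hm (x s)
  have hfst := norm_sub_le_mul_abs_of_hasDerivAt (fun s hs => (hx s hs).fst) hsnd ht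
  rw [hx₀] at hfst
  refine max_le_max ?_ (hsnd t ht)
  calc ‖(x t).1‖ ≤ ‖z.1‖ + ‖(x t).1 - z.1‖ := norm_le_norm_add_norm_sub' _ _
    _ ≤ ‖z.1‖ + C * T := by
      gcongr
      exact hfst.trans (mul_le_mul_of_nonneg_left (ht.le.trans hS) (Real.sqrt_nonneg _))

end Drift

section Rank

variable {Φ : ℝ → ℝ}

lemma Generic.eq_zero_of_linear_relation (hΦ : Generic Φ) {a b c₁ c₂ : ℝ}
    (h : ∀ s, c₁ * deriv (deriv Φ) (a + s) + c₂ * deriv (deriv Φ) (b - s) = 0) : c₁ = 0 := by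
  by_contra hc
  obtain ⟨m, heven | hodd⟩ := exists_symmetry_of_linear_relation hc h
  · exact (hΦ m).1 heven
  · exact (hΦ m).2 hodd

lemma Generic.eventually_ne_zero (hΦ : Generic Φ) (hφ : AnalyticOnNhd ℝ (deriv Φ) univ) (y : ℝ) :
    ∀ᶠ s in 𝓝[≠] y, deriv (deriv Φ) s ≠ 0 := by
  by_contra hfreq
  have hzero := hφ.deriv.eqOn_zero_of_preconnected_of_frequently_eq_zero isPreconnected_univ
    (mem_univ y) (by simpa only [not_eventually, not_not] using hfreq)
  exact (hΦ 0).1 fun t => (hzero (mem_univ _)).trans (hzero (mem_univ (0 - t))).symm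

variable {n : ℕ} [NeZero n]

lemma fin_cyclic_induction {P : Fin n → Prop} (hzero : P 0) (hsucc : ∀ j, P j → P (j + 1))
    (j : Fin n) : P j := by
  have hnat : ∀ m : ℕ, P (Fin.ofNat n m) := fun m => by
    induction m with
    | zero => exact hzero
    | succ m ih =>
      rw [show Fin.ofNat n (m + 1) = Fin.ofNat n m + 1 by ext; simp [Fin.val_add]]
      exact hsucc _ ih
  simpa using hnat j

lemma fderiv_drift_ep (hφ : Differentiable ℝ (deriv Φ)) (z : State n) (j : Fin n) :
    fderiv ℝ (drift n Φ) z (ep n j) = eq' n j := by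
  rw [fderiv_drift hφ]
  ext k <;> simp [ep, eq']

lemma fderiv_drift_eq' (hφ : Differentiable ℝ (deriv Φ)) (z : State n) (j : Fin n) :
    fderiv ℝ (drift n Φ) z (eq' n j) =
      deriv (deriv Φ) (z.1 j - z.1 (j + 1)) • (ep n (j + 1) - ep n j) +
        deriv (deriv Φ) (z.1 (j - 1) - z.1 j) • (ep n (j - 1) - ep n j) := by
  rw [fderiv_drift hφ]
  ext k
  · simp [ep, eq']
  · have hprev : (Pi.single j 1 : Fin n → ℝ) (k - 1) = (Pi.single (j + 1) 1 : Fin n → ℝ) k := by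
      simp only [Pi.single_apply, sub_eq_iff_eq_add]
    have hnext : (Pi.single j 1 : Fin n → ℝ) (k + 1) = (Pi.single (j - 1) 1 : Fin n → ℝ) k := by
      simp only [Pi.single_apply, eq_sub_iff_add_eq]
    have hsupp : ∀ (g : Fin n → ℝ) i, g k * (Pi.single i 1 : Fin n → ℝ) k =
        g i * (Pi.single i 1 : Fin n → ℝ) k := fun g i => by
      obtain rfl | h := eq_or_ne k i
      · rfl
      · simp [h]
    have h₁ := hsupp (fun k => deriv (deriv Φ) (z.1 (k - 1) - z.1 k)) (j + 1)
    have h₂ := hsupp (fun k => deriv (deriv Φ) (z.1 (k - 1) - z.1 k)) j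
    have h₃ := hsupp (fun k => deriv (deriv Φ) (z.1 k - z.1 (k + 1))) j
    have h₄ := hsupp (fun k => deriv (deriv Φ) (z.1 k - z.1 (k + 1))) (j - 1)
    simp only [add_sub_cancel_right, sub_add_cancel] at h₁ h₂ h₃ h₄
    simp only [eq', ep, hprev, hnext, Prod.snd_add, Prod.smul_snd, Prod.snd_sub, Pi.add_apply,
      Pi.smul_apply, Pi.sub_apply, smul_eq_mul]
    linear_combination h₁ - h₂ - h₃ + h₄

lemma eq_sum_eq'_add_sum_ep (v : State n) :
    v = ∑ j, v.1 j • eq' n j + ∑ j, v.2 j • (ep n j - ep n 0) +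
      totalMomentum n v • ep n 0 := by
  have hfst : ∑ j, v.1 j • eq' n j = (v.1, 0) := by
    ext k <;> simp [Prod.fst_sum, Prod.snd_sum, eq', Finset.sum_apply, Pi.single_apply]
  have hsnd : ∑ j, v.2 j • ep n j = (0, v.2) := by
    ext k <;> simp [Prod.fst_sum, Prod.snd_sum, ep, Finset.sum_apply, Pi.single_apply]
  simp only [smul_sub, Finset.sum_sub_distrib, ← Finset.sum_smul, hfst, hsnd, totalMomentum_apply]
  ext <;> simp

lemma ker_totalMomentum_le {L : Submodule ℝ (State n)} (hq : ∀ j, eq' n j ∈ L)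
    (hp : ∀ j, ep n (j + 1) - ep n j ∈ L) : (totalMomentum n).ker ≤ L := by
  have hep : ∀ j, ep n j - ep n 0 ∈ L := fun j => by
    induction j using fin_cyclic_induction with
    | hzero => simp
    | hsucc j ih => simpa using L.add_mem (hp j) ih
  intro v hv
  rw [eq_sum_eq'_add_sum_ep v, show totalMomentum n v = 0 from hv, zero_smul, add_zero]
  exact L.add_mem (L.sum_mem fun j _ => L.smul_mem _ (hq j))
    (L.sum_mem fun j _ => L.smul_mem _ (hep j))

/-- The drift conjugated by the translation by `u • e` in the `p₁`-direction `e`. -/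
def shiftedDrift (n : ℕ) [NeZero n] (Φ : ℝ → ℝ) (u : ℝ) (z : State n) : State n :=
  drift n Φ z + u • eq' n 0

lemma contDiff_shiftedDrift {m : WithTop ℕ∞} (hφ : ContDiff ℝ m (deriv Φ)) (u : ℝ) :
    ContDiff ℝ m (shiftedDrift n Φ u) :=
  (contDiff_drift hφ).add contDiff_const

lemma fderiv_shiftedDrift (u : ℝ) (z : State n) :
    fderiv ℝ (shiftedDrift n Φ u) z = fderiv ℝ (drift n Φ) z := by
  unfold shiftedDrift
  rw [fderiv_add_const]

variable {c : ℝ} {χ : SignType → ℝ → State n → State n} {x : State n} {Y : State n → State n}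

lemma shiftedDrift_mem_tangentFields (hφ : ContDiff ℝ 2 (deriv Φ)) (hc : c ≠ 0)
    (hχ : ∀ u : SignType, IsFlow (c • shiftedDrift n Φ u) (χ u)) (u : SignType) :
    shiftedDrift n Φ u ∈ tangentFields χ x :=
  (Submodule.smul_mem_iff _ hc).mp
    (mem_tangentFields hχ (fun u => (contDiff_shiftedDrift hφ u).const_smul c) u)

lemma lieBracket_shiftedDrift_mem_tangentFields (hφ : ContDiff ℝ 2 (deriv Φ)) (hc : c ≠ 0)
    (hχ : ∀ u : SignType, IsFlow (c • shiftedDrift n Φ u) (χ u)) (hYd : Differentiable ℝ Y)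
    (hY : Y ∈ tangentFields χ x) (u : SignType) :
    (fun z => fderiv ℝ Y z (shiftedDrift n Φ u z) - fderiv ℝ (drift n Φ) z (Y z)) ∈
      tangentFields χ x := by
  have hdrift : ∀ u : SignType, ContDiff ℝ 2 (c • shiftedDrift n Φ u) := fun u =>
    (contDiff_shiftedDrift hφ u).const_smul c
  refine (Submodule.smul_mem_iff _ hc).mp ?_
  convert lieBracket_mem_tangentFields hχ hdrift u hYd hY using 1
  funext z
  rw [VectorField.lieBracket_const_smul_left
    ((contDiff_shiftedDrift hφ u).differentiable two_ne_zero z)]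
  simp only [VectorField.lieBracket_eq, fderiv_shiftedDrift, Pi.smul_apply]

lemma eq'_zero_mem_tangentFields (hφ : ContDiff ℝ 2 (deriv Φ)) (hc : c ≠ 0)
    (hχ : ∀ u : SignType, IsFlow (c • shiftedDrift n Φ u) (χ u)) :
    Function.const _ (eq' n 0) ∈ tangentFields χ x := by
  convert sub_mem (shiftedDrift_mem_tangentFields hφ hc hχ 1)
    (shiftedDrift_mem_tangentFields hφ hc hχ 0) using 1
  funext z
  simp [shiftedDrift]

lemma fderiv_eq'_zero_mem_tangentFields (hφ : ContDiff ℝ 2 (deriv Φ)) (hc : c ≠ 0)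
    (hχ : ∀ u : SignType, IsFlow (c • shiftedDrift n Φ u) (χ u)) (hYd : Differentiable ℝ Y)
    (hY : Y ∈ tangentFields χ x) :
    (fun z => fderiv ℝ Y z (eq' n 0)) ∈ tangentFields χ x := by
  convert sub_mem (lieBracket_shiftedDrift_mem_tangentFields hφ hc hχ hYd hY 1)
    (lieBracket_shiftedDrift_mem_tangentFields hφ hc hχ hYd hY 0) using 1
  funext z
  simp [shiftedDrift]

lemma fderiv_drift_mem_tangentFields (hφ : ContDiff ℝ 2 (deriv Φ)) (hc : c ≠ 0)
    (hχ : ∀ u : SignType, IsFlow (c • shiftedDrift n Φ u) (χ u)) {v : State n}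
    (hv : Function.const _ v ∈ tangentFields χ x) :
    (fun z => fderiv ℝ (drift n Φ) z v) ∈ tangentFields χ x := by
  convert neg_mem (lieBracket_shiftedDrift_mem_tangentFields hφ hc hχ
    (differentiable_const v) hv 0) using 1
  funext z
  simp

/-- Differentiating in `q₁` the bracket of `∂/∂q₁` with the drift, at a point, produces the
combinations of `∂/∂p₂ - ∂/∂p₁` and `∂/∂pₙ - ∂/∂p₁` with coefficients `Φ''(a + s)` and `Φ''(b - s)`
for all `s`; genericity separates the two directions. -/
lemma ep_one_sub_ep_zero_mem_tangentFields (hφ : AnalyticOnNhd ℝ (deriv Φ) univ)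
    (hΦ : Generic Φ) (hc : c ≠ 0)
    (hχ : ∀ u : SignType, IsFlow (c • shiftedDrift n Φ u) (χ u)) :
    Function.const _ (ep n 1 - ep n 0) ∈ tangentFields χ x := by
  obtain hn | hn := eq_or_ne (1 : Fin n) 0
  · rw [hn, sub_self]
    exact zero_mem _
  have hφ₂ : ContDiff ℝ 2 (deriv Φ) := hφ.contDiff
  refine mem_tangentFields_of_forall_exists fun z => ?_
  by_contra hz
  obtain ⟨f, hfz, hf⟩ := Submodule.exists_le_ker_of_notMem hz
  refine hfz (hΦ.eq_zero_of_linear_relation (a := z.1 0 - z.1 1) (b := z.1 (-1) - z.1 0)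
    (c₂ := f (ep n (-1) - ep n 0)) fun s => ?_)
  have htranslate := comp_add_smul_mem_tangentFields
    (fun z hz => (ContinuousLinearMap.apply ℝ (State n) (eq' n 0)).comp_analyticOnNhd
      (analyticOnNhd_drift hφ).fderiv z hz)
    (fderiv_drift_mem_tangentFields hφ₂ hc hχ (eq'_zero_mem_tangentFields (x := x) hφ₂ hc hχ))
    (fun X hXd hX => fderiv_eq'_zero_mem_tangentFields hφ₂ hc hχ hXd hX) s
  have hneg : (-1 : Fin n) ≠ 0 := neg_ne_zero.mpr hn
  have hvalue : fderiv ℝ (drift n Φ) (z + s • eq' n 0) (eq' n 0) =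
      deriv (deriv Φ) (z.1 0 - z.1 1 + s) • (ep n 1 - ep n 0) +
        deriv (deriv Φ) (z.1 (-1) - z.1 0 - s) • (ep n (-1) - ep n 0) := by
    rw [fderiv_drift_eq' (hφ₂.differentiable two_ne_zero)]
    simp [eq', hn, hneg, sub_sub, add_sub_right_comm]
  have hker : f (fderiv ℝ (drift n Φ) (z + s • eq' n 0) (eq' n 0)) = 0 :=
    hf (Submodule.mem_map_of_mem (f := LinearMap.proj z) htranslate)
  rw [hvalue, map_add, map_smul, map_smul, smul_eq_mul, smul_eq_mul] at hker
  rw [← hker, Function.const_apply]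
  ring

lemma eq'_succ_mem_tangentFields (hφ : ContDiff ℝ 2 (deriv Φ)) (hc : c ≠ 0)
    (hχ : ∀ u : SignType, IsFlow (c • shiftedDrift n Φ u) (χ u)) {j : Fin n}
    (hq : Function.const _ (eq' n j) ∈ tangentFields χ x)
    (hp : Function.const _ (ep n (j + 1) - ep n j) ∈ tangentFields χ x) :
    Function.const _ (eq' n (j + 1)) ∈ tangentFields χ x := by
  convert add_mem hq (fderiv_drift_mem_tangentFields hφ hc hχ hp) using 1
  funext z
  simp [fderiv_drift_ep (hφ.differentiable two_ne_zero)]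

lemma ep_succ_sub_ep_mem_tangentFields (hφ : AnalyticOnNhd ℝ (deriv Φ) univ) (hΦ : Generic Φ)
    (hc : c ≠ 0) (hχ : ∀ u : SignType, IsFlow (c • shiftedDrift n Φ u) (χ u)) {j : Fin n}
    (hq : Function.const _ (eq' n (j + 1)) ∈ tangentFields χ x)
    (hp : Function.const _ (ep n (j + 1) - ep n j) ∈ tangentFields χ x) :
    Function.const _ (ep n (j + 1 + 1) - ep n (j + 1)) ∈ tangentFields χ x := by
  obtain hn | hn := eq_or_ne (1 : Fin n) 0
  · rw [hn, add_zero (j + 0), sub_self]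
    exact zero_mem _
  have hφ₂ : ContDiff ℝ 2 (deriv Φ) := hφ.contDiff
  have hsmul : (fun z : State n => deriv (deriv Φ) (z.1 (j + 1) - z.1 (j + 1 + 1)) •
      Function.const _ (ep n (j + 1 + 1) - ep n (j + 1)) z) ∈ tangentFields χ x := by
    convert add_mem (fderiv_drift_mem_tangentFields hφ₂ hc hχ hq) (smul_mem_tangentFields
      (fun z : State n => deriv (deriv Φ) (z.1 j - z.1 (j + 1))) hp) using 1
    funext z
    simp only [fderiv_drift_eq' (hφ₂.differentiable two_ne_zero), Pi.add_apply,
      Function.const_apply, add_sub_cancel_right]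
    module
  refine mem_tangentFields_of_smul_mem continuous_const hsmul hq fun γ hγ => ?_
  have hdist : HasDerivAt (fun s => (γ s).1 (j + 1) - (γ s).1 (j + 1 + 1)) 1 0 := by
    have hγ₁ := hasDerivAt_pi.mp hγ.fst
    exact ((hγ₁ (j + 1)).sub (hγ₁ (j + 1 + 1))).congr_deriv (by simp [eq', hn])
  exact ((hdist.tendsto_nhdsNE one_ne_zero).eventually
    (hΦ.eventually_ne_zero hφ _)).frequently.filter_mono nhdsWithin_le_nhds

lemma const_mem_tangentFields_of_mem_ker (hφ : AnalyticOnNhd ℝ (deriv Φ) univ)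
    (hΦ : Generic Φ) (hc : c ≠ 0)
    (hχ : ∀ u : SignType, IsFlow (c • shiftedDrift n Φ u) (χ u)) {v : State n}
    (hv : v ∈ (totalMomentum n).ker) : Function.const _ v ∈ tangentFields χ x := by
  have hbasis : ∀ j, Function.const _ (eq' n j) ∈ tangentFields χ x ∧
      Function.const _ (ep n (j + 1) - ep n j) ∈ tangentFields χ x := fun j => by
    induction j using fin_cyclic_induction with
    | hzero =>
      rw [zero_add]
      exact ⟨eq'_zero_mem_tangentFields hφ.contDiff hc hχ,
        ep_one_sub_ep_zero_mem_tangentFields hφ hΦ hc hχ⟩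
    | hsucc j ih =>
      have hq := eq'_succ_mem_tangentFields hφ.contDiff hc hχ ih.1 ih.2
      exact ⟨hq, ep_succ_sub_ep_mem_tangentFields hφ hΦ hc hχ hq ih.2⟩
  exact ker_totalMomentum_le
    (L := (tangentFields χ x).comap (LinearMap.pi fun _ => LinearMap.id))
    (fun j => (hbasis j).1) (fun j => (hbasis j).2) hv

end Rank

section Projection

variable {E : Type*} [NormedAddCommGroup E] [NormedSpace ℝ E] {Y : E → E} {ψ : ℝ → E → E}

namespace IsFlow

lemma apply_eq_of_hasDerivAt_zero {F : Type*} [NormedAddCommGroup F] [NormedSpace ℝ F]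
    (h : IsFlow Y ψ) {f : E → F} (hf : ∀ z t, HasDerivAt (fun s => f (ψ s z)) 0 t) (t : ℝ) (z : E) :
    f (ψ t z) = f z := by
  rw [is_const_of_deriv_eq_zero (fun s => (hf z s).differentiableAt) (fun s => (hf z s).deriv) t 0,
    h.zero]

lemma clm_apply_eq {F : Type*} [NormedAddCommGroup F] [NormedSpace ℝ F] (h : IsFlow Y ψ)
    {ℓ : E →L[ℝ] F} (hℓ : ∀ z, ℓ (Y z) = 0) (t : ℝ) (z : E) : ℓ (ψ t z) = ℓ z :=
  h.apply_eq_of_hasDerivAt_zero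
    (fun z t => (ℓ.hasFDerivAt.comp_hasDerivAt t (h.hasDerivAt z t)).congr_deriv (hℓ _)) t z

lemma comp_add_const (h : IsFlow Y ψ) (v : E) :
    IsFlow (fun z => Y (z + v)) (fun t z => ψ t (z + v) - v) where
  zero z := by rw [h.zero, add_sub_cancel_right]
  hasDerivAt z t := by
    rw [sub_add_cancel]
    exact (h.hasDerivAt (z + v) t).sub_const v

variable {P : E →L[ℝ] E}

lemma apply_sub_clm_apply_eq (h : IsFlow Y ψ) (hPY : ∀ z, P (Y z) = Y z) (t : ℝ) (z : E) :
    ψ t z - P (ψ t z) = z - P z :=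
  h.clm_apply_eq (ℓ := .id ℝ E - P) (fun z => by simp [hPY]) t z

lemma comp_projection (h : IsFlow Y ψ) (hP : ∀ z, P (P z) = P z) (hPY : ∀ z, P (Y z) = Y z) :
    IsFlow (Y ∘ P) (fun t z => ψ t (P z) + (z - P z)) where
  zero z := by rw [h.zero, add_sub_cancel]
  hasDerivAt z t := by
    have hfix := h.apply_sub_clm_apply_eq hPY t (P z)
    rw [hP, sub_self, sub_eq_zero] at hfix
    simp only [Function.comp_apply, map_add, map_sub, hP, sub_self, add_zero, ← hfix]
    exact (h.hasDerivAt (P z) t).add_const _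

/-- Recurrence for a flow on the range of a projection `P`. The flow of `Y ∘ P` extends it to a
volume-preserving flow of the whole space that moves every fibre of `P` by translations. -/
theorem mem_closure_of_isBounded [FiniteDimensional ℝ E] (h : IsFlow Y ψ) (hY : ContDiff ℝ 2 Y)
    (hP : ∀ z, P (P z) = P z) (hPY : ∀ z, P (Y z) = Y z)
    (htrace : ∀ z, LinearMap.trace ℝ E ((fderiv ℝ Y (P z)).comp P) = 0) {K : Set E}
    (hK : Bornology.IsBounded K) (hopen : IsOpen (P ⁻¹' K)) {t : ℝ} (hmaps : MapsTo (ψ t) K K)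
    {z : E} (hz : P z = z) (hzK : ψ t z ∈ K) : z ∈ closure K := by
  borelize E
  have hrel := h.comp_projection hP hPY
  have hYP : ContDiff ℝ 2 (Y ∘ P) := hY.comp P.contDiff
  have hpreserving := hrel.measurePreserving Measure.addHaar hYP (fun z => by
    rw [fderiv_comp z (hY.differentiable two_ne_zero (P z)) P.differentiableAt, P.fderiv]
    exact htrace z) t
  have hproj : ∀ y, P (ψ t (P y)) = ψ t (P y) := fun y => by
    have hfix := h.apply_sub_clm_apply_eq hPY t (P y)
    rwa [hP, sub_self, sub_eq_zero, eq_comm] at hfix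
  set W := P ⁻¹' K ∩ {y | ‖y - P y‖ < 1}
  have hWopen : IsOpen W := hopen.inter (isOpen_lt (by fun_prop) continuous_const)
  have hWbdd : Bornology.IsBounded W := by
    obtain ⟨R, hR⟩ := hK.exists_norm_le
    refine isBounded_iff_forall_norm_le.mpr ⟨R + 1, fun y hy => ?_⟩
    calc ‖y‖ ≤ ‖P y‖ + ‖y - P y‖ := norm_le_norm_add_norm_sub' y (P y)
      _ ≤ R + 1 := add_le_add (hR _ hy.1) (le_of_lt hy.2)
  have hWmaps : MapsTo (fun y => ψ t (P y) + (y - P y)) W W := fun y hy => by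
    simp only [W, mem_inter_iff, mem_preimage, mem_ofPred_eq, map_add, map_sub, hP, hproj, sub_self,
      add_zero, add_sub_cancel_left]
    exact ⟨hmaps hy.1, hy.2⟩
  have hfix : P (ψ t z) = ψ t z := by simpa only [hz] using hproj z
  have hzW : z ∈ closure W :=
    preimage_subset_closure_of_mapsTo hpreserving
      (hrel.continuous_apply (hYP.of_le one_le_two) t) hWopen hWbdd.measure_lt_top.ne hWmaps
      (by simpa [W, hz, hfix] using hzK)
  rw [← hz]
  exact map_mem_closure P.continuous hzW fun y hy => hy.1

end IsFlow

end Projection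

section CenterOfMass

lemma trace_eq_zero_of_swaps_factors {R M N : Type*} [CommRing R] [AddCommGroup M] [Module R M]
    [Module.Free R M] [Module.Finite R M] [AddCommGroup N] [Module R N] [Module.Free R N]
    [Module.Finite R N] {L : M × N →ₗ[R] M × N} (hfst : ∀ v, (L (v, 0)).1 = 0)
    (hsnd : ∀ w, (L (0, w)).2 = 0) : LinearMap.trace R (M × N) L = 0 := by
  have hL : L = .inl R M N ∘ₗ .fst R M N ∘ₗ L ∘ₗ .inr R M N ∘ₗ .snd R M N +
      .inr R M N ∘ₗ .snd R M N ∘ₗ L ∘ₗ .inl R M N ∘ₗ .fst R M N := by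
    refine LinearMap.prod_ext (LinearMap.ext fun v => ?_) (LinearMap.ext fun w => ?_)
    · ext <;> simp [hfst]
    · ext <;> simp [hsnd]
  rw [hL, map_add, LinearMap.trace_comp_comm' _ (.inl R M N),
    LinearMap.trace_comp_comm' _ (.inr R M N)]
  simp [LinearMap.comp_assoc]

variable {n : ℕ}

/-- The projection onto the states of zero total momentum that subtracts the mean momentum from
each particle. -/
def centerMomentum (n : ℕ) : State n →L[ℝ] State n :=
  .id ℝ (State n) - (totalMomentum n).smulRight (0, fun _ => (n : ℝ)⁻¹)

lemma centerMomentum_apply (z : State n) :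
    centerMomentum n z = z - totalMomentum n z • (0, fun _ => (n : ℝ)⁻¹) := rfl

lemma centerMomentum_eq_self {z : State n} (hz : totalMomentum n z = 0) :
    centerMomentum n z = z := by
  rw [centerMomentum_apply, hz, zero_smul, sub_zero]

variable [NeZero n] {q : Fin n → ℝ} {D : ℝ}

lemma sub_le_mul_of_forall_sub_succ_le (hD : 0 ≤ D) (hq : ∀ k, q k - q (k + 1) ≤ D)
    (i j : Fin n) : q i - q j ≤ n * D := by
  have hnat : ∀ m : ℕ, q i - q (i + Fin.ofNat n m) ≤ m * D := fun m => by
    induction m with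
    | zero => simp
    | succ m ih =>
      rw [show Fin.ofNat n (m + 1) = Fin.ofNat n m + 1 by ext; simp [Fin.val_add], ← add_assoc]
      push_cast
      linarith [hq (i + Fin.ofNat n m)]
  calc q i - q j = q i - q (i + Fin.ofNat n (j - i).val) := by simp
    _ ≤ (j - i).val * D := hnat _
    _ ≤ n * D := by gcongr; exact (j - i).isLt.le

lemma abs_le_abs_sum_add_of_forall_sub_le (hq : ∀ i j, q i - q j ≤ D) (k : Fin n) :
    |q k| ≤ |∑ i, q i| + D := by
  have hn : (1 : ℝ) ≤ n := by exact_mod_cast NeZero.one_le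
  have : 0 ≤ D := by simpa using hq k k
  have habs : |∑ i, (q k - q i)| ≤ n * D :=
    (Finset.abs_sum_le_sum_abs _ _).trans ((Finset.sum_le_sum fun i _ =>
      abs_le.mpr ⟨by linarith [hq i k], hq k i⟩).trans_eq (by simp))
  have hsum : ∑ i, (q k - q i) = n * q k - ∑ i, q i := by simp
  rw [hsum] at habs
  have hmul : n * |q k| ≤ n * (|∑ i, q i| + D) :=
    calc n * |q k| = |n * q k| := by rw [abs_mul, Nat.abs_cast]
      _ ≤ |∑ i, q i| + |n * q k - ∑ i, q i| := by
        simpa using abs_add_le (∑ i, q i) (n * q k - ∑ i, q i)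
      _ ≤ n * |∑ i, q i| + n * D :=
        add_le_add (le_mul_of_one_le_left (abs_nonneg _) hn) habs
      _ = n * (|∑ i, q i| + D) := (mul_add _ _ _).symm
  exact le_of_mul_le_mul_left hmul (one_pos.trans_le hn)

variable {Φ : ℝ → ℝ}

lemma isBounded_energy_le (hbdd : BddBelow (range Φ)) (htop : Tendsto Φ atTop atTop) (C R : ℝ) :
    Bornology.IsBounded {z : State n | energy n Φ z ≤ C ∧ |∑ k, z.1 k| ≤ R} := by
  obtain ⟨m, hm⟩ := hbdd
  have hm : ∀ y, m ≤ Φ y := fun y => hm ⟨y, rfl⟩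
  obtain ⟨B, hB⟩ := eventually_atTop.mp (htop.eventually_gt_atTop (C - (n - 1) * m))
  refine isBounded_iff_forall_norm_le.mpr
    ⟨max (R + n * max B 0) √(2 * (C - n * m)), fun z ⟨hC, hR⟩ => max_le_max ?_ ?_⟩
  · have hnext : ∀ k, z.1 k - z.1 (k + 1) ≤ max B 0 := fun k => by
      by_contra! hk
      linarith [hB _ ((le_max_left B 0).trans hk.le), potential_le_energy hm z k]
    have hdiff := sub_le_mul_of_forall_sub_succ_le (le_max_right B 0) hnext
    exact (pi_norm_le_iff_of_nonempty z.1).mpr fun k =>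
      (abs_le_abs_sum_add_of_forall_sub_le hdiff k).trans (by gcongr)
  · exact (norm_snd_le_sqrt_energy hm z).trans (by gcongr)

lemma totalMomentum_centerMomentum (z : State n) : totalMomentum n (centerMomentum n z) = 0 := by
  have hn : (n : ℝ) ≠ 0 := NeZero.ne _
  rw [centerMomentum_apply, map_sub, map_smul, totalMomentum_apply (0, _)]
  simp [hn]

lemma trace_fderiv_drift_comp_centerMomentum (hφ : Differentiable ℝ (deriv Φ)) (z : State n) :
    LinearMap.trace ℝ (State n) ((fderiv ℝ (drift n Φ) z).comp (centerMomentum n)) = 0 := by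
  refine trace_eq_zero_of_swaps_factors (fun v => ?_) (fun w => ?_)
  · simp [fderiv_drift hφ, centerMomentum_apply, totalMomentum_apply]
  · ext k
    simp [fderiv_drift hφ, centerMomentum_apply]

end CenterOfMass

section ShiftedFlow

lemma exists_seq_of_reflTransGen {α : Type*} {r : α → α → Prop} {a b : α}
    (h : Relation.ReflTransGen r a b) : ∃ (m : ℕ) (z : ℕ → α), z 0 = a ∧ z m = b ∧
      (∀ i ≤ m, Relation.ReflTransGen r a (z i)) ∧ ∀ i < m, r (z i) (z (i + 1)) := by
  induction h using Relation.ReflTransGen.head_induction_on with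
  | refl => exact ⟨0, fun _ => b, rfl, rfl, fun _ _ => .refl, fun _ hi => absurd hi (by simp)⟩
  | @head a _ hac _ ih =>
    obtain ⟨m, z, rfl, hm, hz, hstep⟩ := ih
    refine ⟨m + 1, fun i => i.casesOn a z, rfl, hm, fun i hi => ?_, fun i hi => ?_⟩
    · cases i with
      | zero => exact .refl
      | succ i => exact .head hac (hz i (by lia))
    · cases i with
      | zero => exact hac
      | succ i => exact hstep i (by lia)

/-- The flow `ψ` conjugated by the translation by `u • e` in the `p₁`-direction `e`. -/
def shiftedFlow {n : ℕ} [NeZero n] (ψ : ℝ → State n → State n) (u t : ℝ) (z : State n) : State n :=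
  ψ t (z + u • ep n 0) - u • ep n 0

variable {n : ℕ} [NeZero n] {Φ : ℝ → ℝ} {ψ : ℝ → State n → State n} {x : State n}

@[simp] lemma shiftedFlow_zero : shiftedFlow ψ 0 = ψ := by
  funext t z
  simp [shiftedFlow]

lemma IsFlow.shiftedFlow (h : IsFlow (drift n Φ) ψ) (u : ℝ) :
    IsFlow (shiftedDrift n Φ u) (shiftedFlow ψ u) := by
  have hdrift : shiftedDrift n Φ u = fun z => drift n Φ (z + u • ep n 0) := by
    funext z
    ext k <;> simp [shiftedDrift, drift, ep, eq']
  rw [hdrift]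
  exact h.comp_add_const (u • ep n 0)

lemma totalMomentum_shiftedDrift (u : ℝ) (z : State n) :
    totalMomentum n (shiftedDrift n Φ u z) = 0 := by
  rw [shiftedDrift, map_add, totalMomentum_drift, map_smul, totalMomentum_apply]
  simp [eq']

/-- The reversed shifted drift is the nonnegative combination `-f_u = f_{-u} + 2 (-f)`. -/
lemma mapsTo_shiftedFlow_neg (hφ : ContDiff ℝ 1 (deriv Φ)) (h : IsFlow (drift n Φ) ψ)
    {D : Set (State n)} (hD : IsClosed D)
    (hshift : ∀ u : SignType, ∀ t : ℝ, 0 ≤ t → MapsTo (shiftedFlow ψ u t) D D)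
    (hneg : ∀ t : ℝ, 0 ≤ t → MapsTo (ψ (-t)) D D) (u : SignType) {t : ℝ} (ht : 0 ≤ t) :
    MapsTo (shiftedFlow ψ u (-t)) D D := by
  refine (h.shiftedFlow u).neg.mapsTo_of_eq_add (contDiff_shiftedDrift hφ u).neg
    (h.shiftedFlow ((-u : SignType) : ℝ)) (contDiff_shiftedDrift hφ _) h.neg
    (contDiff_drift hφ).neg zero_le_one zero_le_two (fun z => ?_) hD (hshift (-u)) hneg ht
  simp only [shiftedDrift, Pi.neg_apply, SignType.coe_neg]
  module

lemma sum_fst_flow_eq (h : IsFlow (drift n Φ) ψ) {z : State n} (hz : totalMomentum n z = 0)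
    (t : ℝ) : ∑ k, (ψ t z).1 k = ∑ k, z.1 k := by
  have hderiv : ∀ s, HasDerivAt (fun s => ∑ k, (ψ s z).1 k) 0 s := fun s => by
    refine (HasDerivAt.fun_sum fun k _ =>
      hasDerivAt_pi.mp (h.hasDerivAt z s).fst k).congr_deriv ?_
    change ∑ k, (ψ s z).2 k = 0
    rw [← totalMomentum_apply, h.clm_apply_eq totalMomentum_drift, hz]
  rw [is_const_of_deriv_eq_zero (fun s => (hderiv s).differentiableAt) (fun s => (hderiv s).deriv)
    t 0, h.zero]

/-- Poincaré recurrence on the part of `A` of bounded energy and centre of mass. -/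
lemma mapsTo_neg_closure_of_mapsTo (hΦ : Admissible Φ) (h : IsFlow (drift n Φ) ψ)
    {A : Set (State n)} (hA : ∀ z ∈ A, totalMomentum n z = 0)
    (hopen : IsOpen (centerMomentum n ⁻¹' A)) {t : ℝ} (hmaps : MapsTo (ψ t) A A) :
    MapsTo (ψ (-t)) A (closure A) := by
  intro z hz
  have hφ : ContDiff ℝ 2 (deriv Φ) := hΦ.contDiff_deriv
  have henergy := h.apply_eq_of_hasDerivAt_zero fun z t =>
    hasDerivAt_energy (hΦ.contDiff.differentiable one_ne_zero) (h.hasDerivAt z t)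
  have hback : ψ t (ψ (-t) z) = z := h.apply_neg_apply (contDiff_drift (hφ.of_le one_le_two)) t z
  have hz₀ : totalMomentum n (ψ (-t) z) = 0 := by
    rw [h.clm_apply_eq totalMomentum_drift, hA z hz]
  set B := {y : State n | energy n Φ y < energy n Φ z + 1 ∧ |∑ k, y.1 k| < |∑ k, z.1 k| + 1}
  have hsum : Continuous fun y : State n => |∑ k, y.1 k| := by fun_prop
  have hBopen : IsOpen B :=
    (isOpen_lt (continuous_energy (hΦ.contDiff (m := 1)).continuous) continuous_const).inter
      (isOpen_lt hsum continuous_const)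
  have hBbdd : Bornology.IsBounded B :=
    (isBounded_energy_le hΦ.2.1 hΦ.2.2 _ _).subset fun y hy => ⟨hy.1.le, hy.2.le⟩
  have hmapsAB : MapsTo (ψ t) (A ∩ B) (A ∩ B) := fun y ⟨hyA, hyE, hyS⟩ =>
    ⟨hmaps hyA, (henergy t y).trans_lt hyE, (sum_fst_flow_eq h (hA y hyA) t).symm ▸ hyS⟩
  refine closure_mono inter_subset_left (h.mem_closure_of_isBounded (contDiff_drift hφ)
    (fun y => centerMomentum_eq_self (totalMomentum_centerMomentum y))
    (fun y => centerMomentum_eq_self (totalMomentum_drift y))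
    (fun y => trace_fderiv_drift_comp_centerMomentum (hφ.differentiable two_ne_zero) _)
    (hBbdd.subset inter_subset_right)
    (hopen.inter (hBopen.preimage (centerMomentum n).continuous)) hmapsAB
    (centerMomentum_eq_self hz₀) ?_)
  rw [hback]
  exact ⟨hz, lt_add_one _, lt_add_one _⟩

lemma nonempty_attainableInterior_of_isFlow_smul (hΦ : Admissible Φ) (hgen : Generic Φ) {c : ℝ}
    (hc : c ≠ 0) {χ : SignType → ℝ → State n → State n}
    (hχ : ∀ u : SignType, IsFlow (c • shiftedDrift n Φ u) (χ u)) (x : State n) :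
    (attainableInterior χ (totalMomentum n) x).Nonempty :=
  attainableInterior_nonempty
    (fun u => (hχ u).clm_apply_eq fun z => by simp [totalMomentum_shiftedDrift])
    fun v hv => const_mem_tangentFields_of_mem_ker hΦ.analyticOnNhd_deriv hgen hc hχ hv

theorem attainable_shiftedFlow (hΦ : Admissible Φ) (hgen : Generic Φ)
    (h : IsFlow (drift n Φ) ψ) {x y : State n} (hx : totalMomentum n x = 0)
    (hy : totalMomentum n y = 0) : Attainable (fun u : SignType => shiftedFlow ψ u) x y := by
  have hflow := fun u : SignType => h.shiftedFlow (u : ℝ)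
  have hcont : ∀ (u : SignType) t, Continuous (shiftedFlow ψ u t) := fun u t =>
    (hflow u).continuous_apply (contDiff_shiftedDrift hΦ.contDiff_deriv u) t
  have hinv : ∀ (u : SignType) t z, shiftedFlow ψ u t (shiftedFlow ψ u (-t) z) = z := fun u =>
    (hflow u).apply_neg_apply (contDiff_shiftedDrift hΦ.contDiff_deriv u)
  have hmomentum : ∀ (u : SignType) t z,
      totalMomentum n (shiftedFlow ψ u t z) = totalMomentum n z := fun u =>
    (hflow u).clm_apply_eq (totalMomentum_shiftedDrift _)
  refine attainable_of_mapsTo_closure hcont hinv hmomentum (fun z _ => ?_) (fun z _ => ?_)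
    (fun u t ht => ?_) (hy.trans hx.symm)
  · exact nonempty_attainableInterior_of_isFlow_smul hΦ hgen one_ne_zero
      (fun u => by simpa only [one_smul] using hflow u) z
  · exact nonempty_attainableInterior_of_isFlow_smul hΦ hgen (neg_ne_zero.mpr one_ne_zero)
      (fun u => by simpa only [neg_one_smul] using (hflow u).neg) z
  · set A := attainableInterior (fun u : SignType => shiftedFlow ψ u) (totalMomentum n) x
    have hforward : ∀ u : SignType, ∀ t : ℝ, 0 ≤ t → MapsTo (shiftedFlow ψ u t) A A :=
      fun u t => mapsTo_attainableInterior hcont hinv hmomentum u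
    have hback : ∀ t : ℝ, 0 ≤ t → MapsTo (ψ (-t)) (closure A) (closure A) := fun t ht => by
      have hfree : MapsTo (ψ t) A A := by
        simpa only [SignType.coe_zero, shiftedFlow_zero] using hforward 0 t ht
      simpa only [closure_closure] using (mapsTo_neg_closure_of_mapsTo hΦ h
        (fun z hz => hz.1.trans hx) (isOpen_preimage_attainableInterior
          (centerMomentum n).continuous fun z => by rw [totalMomentum_centerMomentum, hx])
        hfree).closure (h.continuous_apply (contDiff_drift hΦ.contDiff_deriv) (-t))
    exact mapsTo_shiftedFlow_neg hΦ.contDiff_deriv h isClosed_closure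
      (fun u t ht => (hforward u t ht).closure (hcont u t)) hback u ht

lemma step_shiftedFlow (h : IsFlow (drift n Φ) ψ) (u : SignType) {t : ℝ} (ht : 0 ≤ t)
    (z : State n) : Step n Φ z (shiftedFlow ψ u t z) := by
  have hfree : FreeReach n Φ (z + (u : ℝ) • ep n 0) (shiftedFlow ψ u t z + (u : ℝ) • ep n 0) :=
    ⟨t, ht, fun s => ψ s (z + (u : ℝ) • ep n 0), h.zero _, fun s _ => h.hasDerivAt _ s,
      by simp [shiftedFlow]⟩
  cases u with
  | zero => exact Or.inl (by simpa using hfree)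
  | neg => exact Or.inr (Or.inr (by simpa [sub_eq_add_neg] using hfree))
  | pos => exact Or.inr (Or.inl (by simpa using hfree))

end ShiftedFlow

theorem attainability_on_zero_momentum_general (n : ℕ) [NeZero n] (Φ : ℝ → ℝ)
    (hadm : Admissible Φ) (hgen : Generic Φ) (xtil xhat : State n)
    (hxtil : (∑ i, xtil.2 i) = 0) (hxhat : (∑ i, xhat.2 i) = 0) :
    ∃ (m : ℕ) (z : ℕ → State n),
      z 0 = xtil ∧ z m = xhat ∧
      (∀ i ≤ m, (∑ j, (z i).2 j) = 0) ∧
      (∀ i < m, Step n Φ (z i) (z (i + 1))) := by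
  simp only [← totalMomentum_apply] at hxtil hxhat ⊢
  obtain ⟨ψ, h⟩ := exists_isFlow_drift n hadm.contDiff hadm.2.1
  obtain ⟨m, z, hz₀, hzm, hz, hstep⟩ :=
    exists_seq_of_reflTransGen (attainable_shiftedFlow hadm hgen h hxtil hxhat)
  refine ⟨m, z, hz₀, hzm, fun i hi => ?_, fun i hi => ?_⟩
  · rw [Attainable.map_eq (fun u => (h.shiftedFlow _).clm_apply_eq (totalMomentum_shiftedDrift _))
      (hz i hi), hxtil]
  · obtain ⟨u, t, ht, hmove⟩ := hstep i hi
    rw [hmove]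
    exact step_shiftedFlow h u ht (z i)

/-- Attainability on the zero-momentum hyperplane without reversing time:
any two points of `Π` are joined by a finite chain of points of `Π`, each step given by
one of `e^{g}∘e^{tf}∘e^{−g}`, `e^{−g}∘e^{tf}∘e^{g}`, `e^{tf}` with `t ≥ 0`. -/
theorem attainability_on_zero_momentum (n : ℕ) [NeZero n] (hn : 3 ≤ n) (Φ : ℝ → ℝ)
    (hadm : Admissible Φ) (hgen : Generic Φ) (xtil xhat : State n)
    (hxtil : (∑ i, xtil.2 i) = 0) (hxhat : (∑ i, xhat.2 i) = 0) :
    ∃ (m : ℕ) (z : ℕ → State n),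
      z 0 = xtil ∧ z m = xhat ∧
      (∀ i ≤ m, (∑ j, (z i).2 j) = 0) ∧
      (∀ i < m, Step n Φ (z i) (z (i + 1))) :=
  attainability_on_zero_momentum_general n Φ hadm hgen xtil xhat hxtil hxhat
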